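/- (Knight–Nadel) Every Scott set of cardinality at most ℵ₁ is the standard system of some non-standard model of Peano arithmetic. -/

import Mathlib

open FirstOrder FirstOrder.Language

/-- Function symbols of the language of arithmetic: `0`, `1`, `+`, `·`. -/
inductive arithFunc : ℕ → Type
  | zero : arithFunc 0
  | one : arithFunc 0
  | add : arithFunc 2
  | mul : arithFunc 2
  deriving DecidableEq

/-- Relation symbols of the language of arithmetic: `<`. -/
inductive arithRel : ℕ → Type
  | lt : arithRel 2
  deriving DecidableEq

/-- The first-order language of arithmetic `{0, 1, +, ·, <}`. -/
def arith : FirstOrder.Language := ⟨arithFunc, arithRel⟩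

namespace Arith

variable {M : Type*} [arith.Structure M]

/-- The interpretation of `0`. -/
def zeroM (M : Type*) [arith.Structure M] : M :=
  Structure.funMap (L := arith) arithFunc.zero ![]

/-- The interpretation of `1`. -/
def oneM (M : Type*) [arith.Structure M] : M :=
  Structure.funMap (L := arith) arithFunc.one ![]

/-- The interpretation of `+`. -/
def addM (x y : M) : M := Structure.funMap (L := arith) arithFunc.add ![x, y]

/-- The interpretation of `·`. -/
def mulM (x y : M) : M := Structure.funMap (L := arith) arithFunc.mul ![x, y]

/-- The interpretation of `<`. -/
def ltM (x y : M) : Prop := Structure.RelMap (L := arith) arithRel.lt ![x, y]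

/-- Non-strict order. -/
def leM (x y : M) : Prop := ltM x y ∨ x = y

/-- The numeral `n` in `M`: `0`, or `1 + 1 + ⋯ + 1`. -/
def numeral (M : Type*) [arith.Structure M] : ℕ → M
  | 0 => zeroM M
  | n + 1 => addM (numeral M n) (oneM M)

/-- The standard `arith`-structure on `ℕ`. -/
instance : arith.Structure ℕ where
  funMap {n} f v :=
    match f with
    | .zero => 0
    | .one => 1
    | .add => v 0 + v 1
    | .mul => v 0 * v 1
  RelMap {n} r v :=
    match r with
    | .lt => v 0 < v 1

/-- `M` is a model of Peano arithmetic: it satisfies the finitely many basic axioms of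
`PA` together with induction for all parametrically definable sets (which is equivalent
to the usual first-order induction scheme). -/
def IsPAModel (M : Type*) [arith.Structure M] : Prop :=
  (∀ x : M, addM x (zeroM M) = x) ∧
  (∀ x y : M, addM x (addM y (oneM M)) = addM (addM x y) (oneM M)) ∧
  (∀ x : M, mulM x (zeroM M) = zeroM M) ∧
  (∀ x y : M, mulM x (addM y (oneM M)) = addM (mulM x y) x) ∧
  (∀ x : M, ¬ ltM x (zeroM M)) ∧
  (∀ x y : M, ltM x (addM y (oneM M)) ↔ (ltM x y ∨ x = y)) ∧
  (∀ x : M, addM x (oneM M) ≠ zeroM M) ∧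
  (∀ x y : M, addM x (oneM M) = addM y (oneM M) → x = y) ∧
  (∀ s : Set M, Set.Definable₁ (Set.univ : Set M) arith s →
    zeroM M ∈ s → (∀ x ∈ s, addM x (oneM M) ∈ s) → ∀ x : M, x ∈ s)

/-- An element of `M` is standard if it is a numeral. -/
def IsStd (x : M) : Prop := ∃ n : ℕ, x = numeral M n

/-- `M` is a non-standard model of `PA`: a model of `PA` not isomorphic to the standard
model `ℕ`. -/
def NonstandardModel (M : Type*) [arith.Structure M] : Prop :=
  IsPAModel M ∧ ¬ Nonempty (M ≃[arith] ℕ)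

/-- `(x)_i = 1`: the `i`-th binary digit of `x` is `1`, for standard `i`.  This is expressed
by saying that `x = u·2^(i+1) + (2^i + v)` with `v < 2^i`, where `2^i`, `2^(i+1)` are
numerals. -/
def digitB (x : M) (i : ℕ) : Prop :=
  ∃ u v : M, x = addM (mulM u (numeral M (2 ^ (i + 1)))) (addM (numeral M (2 ^ i)) v) ∧
    ltM v (numeral M (2 ^ i))

/-- The standard system of `M`: the collection of subsets of `ℕ` coded by some
non-standard element of `M` (via its standard binary digits). -/
def SSy (M : Type*) [arith.Structure M] : Set (Set ℕ) :=
  {X | ∃ a : M, ¬ IsStd a ∧ ∀ i : ℕ, i ∈ X ↔ digitB a i}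

/-- A function `M → M` is definable (with parameters) if its graph is a definable set. -/
def DefinableFun₁ (f : M → M) : Prop :=
  Set.Definable (Set.univ : Set M) arith {v : Fin 2 → M | f (v 0) = v 1}

/-- A `k`-ary function `M^k → M` is definable (with parameters) if its graph is a
definable set. -/
def DefinableFun {k : ℕ} (F : (Fin k → M) → M) : Prop :=
  Set.Definable (Set.univ : Set M) arith
    {v : Fin (k + 1) → M | F (fun i => v i.castSucc) = v (Fin.last k)}

/-- `c` is the internal cardinality of the set `D ⊆ M`: there is an `M`-definable
bijection between `{x : x < c}` and `D`. -/
def InternalCard (D : Set M) (c : M) : Prop :=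
  ∃ f : M → M, DefinableFun₁ f ∧ Set.BijOn f {x : M | ltM x c} D

/-- `y = 2^x` in the model `M`, expressed via the existence of a definable function
satisfying the recursion of the base-`2` exponential up to `x`. -/
def IsPow2 (x y : M) : Prop :=
  ∃ f : M → M, DefinableFun₁ f ∧ f (zeroM M) = oneM M ∧
    (∀ z : M, ltM z x → f (addM z (oneM M)) = addM (f z) (f z)) ∧ f x = y

end Arith

namespace Arith

/-- Relativized partial recursiveness: `RecursiveIn O f` means the partial function `f`
is partial recursive in the total oracle `O`.  This mirrors `Nat.Partrec`, with an extra
constructor for the oracle. -/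
inductive RecursiveIn (O : ℕ → ℕ) : (ℕ →. ℕ) → Prop
  | zero : RecursiveIn O (pure 0)
  | succ : RecursiveIn O Nat.succ
  | left : RecursiveIn O ↑fun n : ℕ => n.unpair.1
  | right : RecursiveIn O ↑fun n : ℕ => n.unpair.2
  | oracle : RecursiveIn O O
  | pair {f g} : RecursiveIn O f → RecursiveIn O g →
      RecursiveIn O fun n => Nat.pair <$> f n <*> g n
  | comp {f g} : RecursiveIn O f → RecursiveIn O g → RecursiveIn O fun n => g n >>= f
  | prec {f g} : RecursiveIn O f → RecursiveIn O g → RecursiveIn O (Nat.unpaired fun a n =>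
      n.rec (f a) fun y IH => do let i ← IH; g (Nat.pair a (Nat.pair y i)))
  | rfind {f} : RecursiveIn O f →
      RecursiveIn O fun a => Nat.rfind fun n => (fun m => m = 0) <$> f (Nat.pair a n)

open Classical in
/-- The characteristic function of a set of natural numbers. -/
noncomputable def charFn (X : Set ℕ) : ℕ → ℕ := fun n => if n ∈ X then 1 else 0

/-- Turing reducibility between sets of natural numbers. -/
def TuringLE (Y X : Set ℕ) : Prop := RecursiveIn (charFn X) (charFn Y)

/-- The Turing join `X ⊕ Y = 2X ∪ (2Y + 1)`. -/
def turingJoin (X Y : Set ℕ) : Set ℕ :=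
  {n | ∃ m ∈ X, n = 2 * m} ∪ {n | ∃ m ∈ Y, n = 2 * m + 1}

/-- A Turing ideal: a collection of subsets of `ℕ` closed under Turing join and Turing
reducibility. -/
def TuringIdeal (S : Set (Set ℕ)) : Prop :=
  (∀ X ∈ S, ∀ Y ∈ S, turingJoin X Y ∈ S) ∧
  (∀ X ∈ S, ∀ Y : Set ℕ, TuringLE Y X → Y ∈ S)

/-- The Turing ideal generated by a collection of subsets of `ℕ`. -/
def tIdealGen (C : Set (Set ℕ)) : Set (Set ℕ) :=
  ⋂₀ {I | TuringIdeal I ∧ C ⊆ I}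

/-- `T ⊆ ℕ` codes a binary tree: the set of finite binary sequences whose codes lie in
`T` is closed under initial segments. -/
def IsBinTreeSet (T : Set ℕ) : Prop :=
  ∀ s : List Bool, Encodable.encode s ∈ T → ∀ t : List Bool, t <+: s → Encodable.encode t ∈ T

/-- The tree coded by `T` is infinite. -/
def TreeInf (T : Set ℕ) : Prop := {s : List Bool | Encodable.encode s ∈ T}.Infinite

/-- `P ⊆ ℕ`, viewed as an infinite branch via its characteristic function, is a path
through the tree coded by `T`. -/
def PathThrough (P T : Set ℕ) : Prop :=
  ∀ f : ℕ → Bool, (∀ i : ℕ, f i = true ↔ i ∈ P) →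
    ∀ m : ℕ, Encodable.encode (List.ofFn fun i : Fin m => f i) ∈ T

/-- A Scott set: a nonempty Turing ideal such that every infinite binary tree in it has
an infinite path in it. -/
def ScottSet (S : Set (Set ℕ)) : Prop :=
  S.Nonempty ∧ TuringIdeal S ∧
  ∀ T ∈ S, IsBinTreeSet T → TreeInf T → ∃ P ∈ S, PathThrough P T

open Classical in
/-- The characteristic function of a set, with values in `Bool`. -/
noncomputable def chi (X : Set ℕ) : ℕ → Bool := fun n => if n ∈ X then true else false

/-- The iterated Turing join `⊕_{i<k} X i`. -/
def joinMany : {k : ℕ} → (Fin k → Set ℕ) → Set ℕ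
  | 0, _ => ∅
  | (k + 1), X => turingJoin (joinMany fun i => X i.castSucc) (X (Fin.last k))

end Arith

/-!
Call a set `B` of elements of a model good if the complete diagram of every finite tuple from `B`,
taken together with the numerals, belongs to the Scott set `S`. Since infinite binary trees in `S`
have paths in `S`, completing theories and adding Henkin witnesses can be carried out inside `S`;
this yields a model whose numerals form a good set, and passing to an ultrapower makes it countably
saturated. There a countable good set remains good after adding a suitable element realizing a
type which is finitely satisfiable and belongs to `S`: complete the type inside `S` over one finite
tuple after another, and realize the union of the resulting diagrams by saturation. In `ℵ₁` such
steps, every stage being countable, one reaches a good set `B` that is an elementary submodel and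
contains a code of every `X ∈ S`. Conversely, the sets coded in `B` are in `S` because `B` is good.
-/

namespace Arith

open Encodable

section Computability

variable {O : ℕ → ℕ} {S : Set (Set ℕ)} {Z : Set ℕ}

theorem RecursiveIn.of_eq {f g : ℕ →. ℕ} (hf : RecursiveIn O f) (h : ∀ n, f n = g n) :
    RecursiveIn O g :=
  (funext h : f = g) ▸ hf

theorem RecursiveIn.of_primrec {f : ℕ → ℕ} (hf : Nat.Primrec f) : RecursiveIn O f := by
  induction hf with
  | zero => exact .zero
  | succ => exact .succ
  | left => exact .left
  | right => exact .right
  | pair _ _ ihf ihg => exact .of_eq (.pair ihf ihg) fun n => by simp [Seq.seq]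
  | comp _ _ ihf ihg => exact .of_eq (.comp ihf ihg) fun _ => Part.bind_some _ _
  | prec _ _ ihf ihg =>
    refine .of_eq (.prec ihf ihg) fun n => ?_
    simp only [Nat.unpaired, PFun.coe_val]
    induction n.unpair.2 with
    | zero => simp
    | succ m ih => simp only [ih]; simp

theorem RecursiveIn.comp_total {f g : ℕ → ℕ} (hf : RecursiveIn O f) (hg : RecursiveIn O g) :
    RecursiveIn O (fun n => f (g n) : ℕ → ℕ) :=
  .of_eq (.comp hf hg) fun _ => Part.bind_some _ _

theorem RecursiveIn.pair_total {f g : ℕ → ℕ} (hf : RecursiveIn O f) (hg : RecursiveIn O g) :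
    RecursiveIn O (fun n => Nat.pair (f n) (g n) : ℕ → ℕ) :=
  .of_eq (.pair hf hg) fun n => by simp [Seq.seq]

theorem chi_eq_true {n : ℕ} : chi Z n = true ↔ n ∈ Z := by
  simp [chi]

theorem chi_eq_decide_charFn (n : ℕ) : chi Z n = decide (charFn Z n = 1) := by
  by_cases h : n ∈ Z <;> simp [chi, charFn, h]

/-- The initial segment of length `m` of the characteristic function of `Z`. -/
noncomputable def initSeg (Z : Set ℕ) (m : ℕ) : List Bool := (List.range m).map (chi Z)

@[simp] theorem length_initSeg (m : ℕ) : (initSeg Z m).length = m := by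
  simp [initSeg]

theorem initSeg_getD {m i : ℕ} (h : i < m) : (initSeg Z m).getD i false = chi Z i := by
  simp [initSeg, List.getD, h]

theorem initSeg_eq_ofFn (m : ℕ) : initSeg Z m = List.ofFn fun i : Fin m => chi Z i :=
  List.ext_getElem (by simp) (by simp [initSeg])

theorem initSeg_succ (m : ℕ) : initSeg Z (m + 1) = initSeg Z m ++ [chi Z m] := by
  simp [initSeg, List.range_succ]

theorem recursiveIn_initSeg (Z : Set ℕ) :
    RecursiveIn (charFn Z) (fun m => encode (initSeg Z m) : ℕ → ℕ) := by
  let append : ℕ → ℕ := fun x =>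
    encode (((decode x.unpair.1.unpair.2.unpair.2).getD [] : List Bool) ++
      [decide (x.unpair.2 = 1)])
  have append_primrec : Nat.Primrec append := by
    refine Primrec.nat_iff.1 (Primrec.encode.comp (Primrec.list_concat.comp ?_ ?_))
    · exact Primrec.option_getD.comp (Primrec.decode.comp (Primrec.snd.comp (Primrec.unpair.comp
        (Primrec.snd.comp (Primrec.unpair.comp (Primrec.fst.comp Primrec.unpair))))))
        (Primrec.const [])
    · exact (Primrec.eq.comp (Primrec.snd.comp Primrec.unpair) (Primrec.const 1)).decide
  have query : RecursiveIn (charFn Z) (fun n => charFn Z n.unpair.2.unpair.1 : ℕ → ℕ) :=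
    .comp_total .oracle (.of_primrec (Nat.Primrec.left.comp Nat.Primrec.right))
  have step := RecursiveIn.comp_total (.of_primrec append_primrec)
    (.pair_total (.of_primrec Nat.Primrec.id) query)
  have build := RecursiveIn.prec
    (.of_primrec (Nat.Primrec.const (encode ([] : List Bool)))) step
  refine .of_eq (.comp build (.of_primrec ((Nat.Primrec.const 0).pair Nat.Primrec.id)))
    fun m => ?_
  simp only [PFun.coe_val, Part.bind_eq_bind, Part.bind_some, Nat.unpaired, Nat.unpair_pair]
  induction m with
  | zero => simp [initSeg]
  | succ m ih =>
    simp only [id] at ih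
    simp only [id, ih]
    simp [append, initSeg_succ, chi_eq_decide_charFn]

theorem turingLE_of_primrec {Q : ℕ → List Bool → Bool} (hQ : Primrec₂ Q) {b : ℕ → ℕ}
    (hb : Primrec b) (Z : Set ℕ) : TuringLE {n | Q n (initSeg Z (b n)) = true} Z := by
  let q : ℕ → ℕ := fun x => cond (Q x.unpair.1 ((decode x.unpair.2).getD [])) 1 0
  have q_primrec : Nat.Primrec q := by
    refine Primrec.nat_iff.1 (Primrec.cond (hQ.comp ?_ ?_) (Primrec.const _) (Primrec.const _))
    · exact Primrec.fst.comp Primrec.unpair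
    · exact Primrec.option_getD.comp (Primrec.decode.comp (Primrec.snd.comp Primrec.unpair))
        (Primrec.const [])
  refine .of_eq (.comp_total (.of_primrec q_primrec) (.pair_total (.of_primrec Nat.Primrec.id)
    (.comp_total (recursiveIn_initSeg Z) (.of_primrec (Primrec.nat_iff.1 hb))))) fun n => ?_
  simp only [q, PFun.coe_val, charFn, Nat.unpair_pair, encodek, Option.getD_some, Set.mem_ofPred_eq,
    id]
  by_cases h : Q n (initSeg Z (b n)) = true <;> simp [h]

theorem ScottSet.mem_of_primrec (hS : ScottSet S) (hZ : Z ∈ S) {Q : ℕ → List Bool → Bool}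
    (hQ : Primrec₂ Q) {b : ℕ → ℕ} (hb : Primrec b) {Y : Set ℕ}
    (hY : ∀ n, n ∈ Y ↔ Q n (initSeg Z (b n)) = true) : Y ∈ S :=
  (Set.ext hY : Y = {n | Q n (initSeg Z (b n)) = true}) ▸
    hS.2.1.2 Z hZ _ (turingLE_of_primrec hQ hb Z)

theorem even_mem_turingJoin {X Y : Set ℕ} {m : ℕ} : 2 * m ∈ turingJoin X Y ↔ m ∈ X := by
  simp only [turingJoin, Set.mem_union, Set.mem_ofPred_eq]
  grind

theorem odd_mem_turingJoin {X Y : Set ℕ} {m : ℕ} : 2 * m + 1 ∈ turingJoin X Y ↔ m ∈ Y := by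
  simp only [turingJoin, Set.mem_union, Set.mem_ofPred_eq]
  grind

variable {α β : Type*} [Primcodable α] [Primcodable β]

/-- The set of codes of the elements of `D`, through which a set of members of a countable type
is said to lie in a Scott set. Numbers with equal decodings are all counted as codes. -/
def codeSet (D : Set α) : Set ℕ := {n | ∃ a ∈ D, decode n = some a}

@[simp] theorem encode_mem_codeSet {D : Set α} {a : α} : encode a ∈ codeSet D ↔ a ∈ D := by
  simp [codeSet]

theorem ScottSet.codeSet_preimage_mem (hS : ScottSet S) (hZ : Z ∈ S) {f : α → ℕ}
    (hf : Primrec f) : codeSet (f ⁻¹' Z) ∈ S := by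
  have image_primrec : Primrec fun n => (decode n).map f :=
    Primrec.option_map Primrec.decode (hf.comp Primrec.snd).to₂
  refine hS.mem_of_primrec hZ
    (Q := fun n z => (((decode n).map f).map fun k => z.getD k false).getD false)
    (b := fun n => ((decode n).map f).getD 0 + 1) ?_
    (Primrec.succ.comp (Primrec.option_getD.comp image_primrec (Primrec.const 0))) fun n => ?_
  · refine Primrec.option_getD.comp (Primrec.option_map (image_primrec.comp Primrec.fst) ?_)
      (Primrec.const false)
    exact ((Primrec.list_getD false).comp (Primrec.snd.comp Primrec.fst) Primrec.snd).to₂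
  · cases h : (decode n : Option α) with
    | none => simp [codeSet, h]
    | some a => simp [codeSet, h, -List.getD_eq_getElem?_getD, initSeg_getD, chi_eq_true]

theorem ScottSet.codeSet_preimage_codeSet_mem (hS : ScottSet S) {D : Set α} (hD : codeSet D ∈ S)
    {f : β → α} (hf : Primrec f) : codeSet (f ⁻¹' D) ∈ S := by
  have : f ⁻¹' D = (fun b => encode (f b)) ⁻¹' codeSet D := by
    ext b; exact (encode_mem_codeSet (D := D)).symm
  exact this ▸ hS.codeSet_preimage_mem hD (Primrec.encode.comp hf)

end Computability

section Compactness

variable {α : Type*} [Primcodable α] {K : ℕ → Bool → List (List (α × Bool))} {S : Set (Set ℕ)}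
  {Z : Set ℕ}

/-- A clause, read as a disjunction of the literals `a` (as `(a, true)`) and `¬ a` (as
`(a, false)`), is true in the valuation making true exactly the members of `D`. -/
def ClauseHolds (D : Set α) (C : List (α × Bool)) : Prop := ∃ p ∈ C, p.1 ∈ D ↔ p.2 = true

/-- The finite binary sequence `s`, read as a partial valuation, does not make `p` false. -/
def Unrefuted (s : List Bool) (p : α × Bool) : Prop := s[encode p.1]? ≠ some !p.2

/-- The `n`-th stage of the enumeration `K` of clauses may consult the `n`-th bit of an oracle,
given here by its initial segment `z`; `s` refutes no clause of the first `|s|` stages. -/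
def IsNode (K : ℕ → Bool → List (List (α × Bool))) (z s : List Bool) : Prop :=
  ∀ n < s.length, ∀ C ∈ K n (z.getD n false), ∃ p ∈ C, Unrefuted s p

theorem primrecRel_unrefuted : PrimrecRel (Unrefuted (α := α)) :=
  .not (Primrec.eq.comp (Primrec.list_getElem?.comp Primrec.fst
    (Primrec.encode.comp (Primrec.fst.comp Primrec.snd))) (Primrec.option_some.comp
      (Primrec.not.comp (Primrec.snd.comp Primrec.snd))))

theorem primrecRel_isNode (hK : Primrec₂ K) : PrimrecRel (IsNode K) := by
  have clause := PrimrecRel.exists_mem_list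
    (R := fun (p : α × Bool) (x : List Bool × List Bool) => Unrefuted x.2 p)
    (primrecRel_unrefuted.comp (Primrec.snd.comp Primrec.snd) Primrec.fst)
  have stage := PrimrecRel.forall_mem_list
    (R := fun (n : ℕ) (x : List Bool × List Bool) =>
      ∀ C ∈ K n (x.1.getD n false), ∃ p ∈ C, Unrefuted x.2 p)
    (clause.forall_mem_list.comp (hK.comp Primrec.fst ((Primrec.list_getD false).comp
      (Primrec.fst.comp Primrec.snd) Primrec.fst)) Primrec.snd)
  refine PrimrecPred.of_eq (stage.comp (f := fun x : List Bool × List Bool =>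
    List.range x.2.length) (g := id) (Primrec.list_range.comp (Primrec.list_length.comp
      Primrec.snd)) Primrec.id) fun x => ?_
  simp [IsNode]

theorem Unrefuted.of_prefix {s t : List Bool} (hts : t <+: s) {p : α × Bool}
    (hp : Unrefuted s p) : Unrefuted t p := by
  obtain ⟨r, rfl⟩ := hts
  intro h
  obtain ⟨hlt, -⟩ := List.getElem?_eq_some_iff.1 h
  exact hp (by rw [List.getElem?_append_left hlt]; exact h)

theorem unrefuted_initSeg {P : Set ℕ} {p : α × Bool} {m : ℕ} (h : encode p.1 < m) :
    Unrefuted (initSeg P m) p ↔ (encode p.1 ∈ P ↔ p.2 = true) := by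
  rw [← chi_eq_true]
  cases hp : p.2 <;> simp [Unrefuted, initSeg, h, hp]

theorem unrefuted_initSeg_of_iff {P : Set ℕ} {p : α × Bool} (hp : encode p.1 ∈ P ↔ p.2 = true)
    (m : ℕ) : Unrefuted (initSeg P m) p := by
  by_cases h : encode p.1 < m
  · exact (unrefuted_initSeg h).2 hp
  · simp [Unrefuted, initSeg, h]

/-- The tree of the finite partial valuations not refuting the clauses enumerated by `K` from
the oracle `Z`. -/
def clauseTree (K : ℕ → Bool → List (List (α × Bool))) (Z : Set ℕ) : Set ℕ :=
  codeSet {s : List Bool | IsNode K (initSeg Z s.length) s}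

theorem encode_mem_clauseTree {s : List Bool} :
    encode s ∈ clauseTree K Z ↔ ∀ n < s.length, ∀ C ∈ K n (chi Z n), ∃ p ∈ C, Unrefuted s p := by
  rw [clauseTree, encode_mem_codeSet]
  exact forall₂_congr fun n hn => by rw [initSeg_getD hn]

theorem ScottSet.clauseTree_mem (hS : ScottSet S) (hZ : Z ∈ S) (hK : Primrec₂ K) :
    clauseTree K Z ∈ S := by
  classical
  obtain ⟨_, decide_primrec⟩ := primrecRel_isNode hK
  refine hS.mem_of_primrec hZ
    (Q := fun x z => ((decode x).map fun s : List Bool => decide (IsNode K z s)).getD false)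
    (b := fun x => ((decode x : Option (List Bool)).map List.length).getD 0) ?_ ?_ fun x => ?_
  · refine Primrec.option_getD.comp (Primrec.option_map (Primrec.decode.comp Primrec.fst) ?_)
      (Primrec.const false)
    exact (decide_primrec.comp (Primrec.pair (Primrec.snd.comp Primrec.fst) Primrec.snd)).of_eq
      fun x => by simp
  · exact Primrec.option_getD.comp (Primrec.option_map Primrec.decode
      (Primrec.list_length.comp Primrec.snd).to₂) (Primrec.const 0)
  · cases h : (decode x : Option (List Bool)) <;> simp [clauseTree, codeSet, h]

theorem isBinTreeSet_clauseTree : IsBinTreeSet (clauseTree K Z) := by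
  intro s hs t hts
  rw [encode_mem_clauseTree] at hs ⊢
  intro n hn C hC
  obtain ⟨p, hpC, hp⟩ := hs n (hn.trans_le hts.length_le) C hC
  exact ⟨p, hpC, hp.of_prefix hts⟩

theorem treeInf_clauseTree
    (h : ∀ N, ∃ D : Set α, ∀ n < N, ∀ C ∈ K n (chi Z n), ClauseHolds D C) :
    TreeInf (clauseTree K Z) := by
  have exists_node (N : ℕ) : ∃ s : List Bool, s.length = N ∧ encode s ∈ clauseTree K Z := by
    obtain ⟨D, hD⟩ := h N
    refine ⟨initSeg (codeSet D) N, length_initSeg N, encode_mem_clauseTree.2 fun n hn C hC => ?_⟩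
    obtain ⟨p, hpC, hp⟩ := hD n (by simpa using hn) C hC
    exact ⟨p, hpC, unrefuted_initSeg_of_iff (encode_mem_codeSet.trans hp) N⟩
  refine Set.Infinite.of_image List.length (Set.infinite_of_forall_exists_gt fun N => ?_)
  obtain ⟨s, hs, hmem⟩ := exists_node (N + 1)
  exact ⟨N + 1, ⟨s, hmem, hs⟩, Nat.lt_succ_self N⟩

theorem clauseHolds_of_pathThrough {P : Set ℕ} (h : PathThrough P (clauseTree K Z)) {n : ℕ}
    {C : List (α × Bool)} (hC : C ∈ K n (chi Z n)) : ClauseHolds (encode ⁻¹' P) C := by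
  have node (m : ℕ) : encode (initSeg P m) ∈ clauseTree K Z :=
    initSeg_eq_ofFn (Z := P) m ▸ h (chi P) (fun _ => chi_eq_true) m
  obtain ⟨m, hm⟩ : ∃ m, ∀ p ∈ C, encode p.1 < m :=
    ⟨(C.map fun p => encode p.1).sum + 1, fun p hp => Nat.lt_succ_of_le
      (List.single_le_sum (by simp) _ (List.mem_map_of_mem hp))⟩
  obtain ⟨p, hpC, hp⟩ := encode_mem_clauseTree.1 (node (max m (n + 1))) n (by simp) C hC
  exact ⟨p, hpC, (unrefuted_initSeg (lt_max_of_lt_left (hm p hpC))).1 hp⟩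

theorem ScottSet.exists_valuation (hS : ScottSet S) (hZ : Z ∈ S) (hK : Primrec₂ K)
    (h : ∀ N, ∃ D : Set α, ∀ n < N, ∀ C ∈ K n (chi Z n), ClauseHolds D C) :
    ∃ D : Set α, codeSet D ∈ S ∧ ∀ n, ∀ C ∈ K n (chi Z n), ClauseHolds D C := by
  obtain ⟨P, hPS, hP⟩ := hS.2.2 _ (hS.clauseTree_mem hZ hK) isBinTreeSet_clauseTree
    (treeInf_clauseTree h)
  exact ⟨_, hS.codeSet_preimage_mem hPS Primrec.encode,
    fun n C hC => clauseHolds_of_pathThrough hP hC⟩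

end Compactness

section Formulas

/-- The symbols of the relational language of arithmetic, in which the operations are given by
their graphs and equality is an ordinary symbol. -/
inductive RelSym
  | add | mul | lt | eq | zero | one

/-- The enumeration of the symbols through which they are coded. -/
def RelSym.equivFin : RelSym ≃ Fin 6 where
  toFun
    | add => 0 | mul => 1 | lt => 2 | eq => 3 | zero => 4 | one => 5
  invFun
    | 0 => add | 1 => mul | 2 => lt | 3 => eq | 4 => zero | 5 => one
  left_inv r := by cases r <;> rfl
  right_inv i := by fin_cases i <;> rfl

instance : Primcodable RelSym := .ofEquiv (Fin 6) RelSym.equivFin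

/-- First-order formulas over `RelSym`, with de Bruijn indices for variables. Every symbol is
ternary; those of smaller arity are applied with their first argument repeated. -/
inductive Form
  | atom (r : RelSym) (i j k : ℕ)
  | nand (φ ψ : Form)
  | all (φ : Form)

namespace Form

/-- The Gödel number of a formula. -/
def toNat : Form → ℕ
  | atom r i j k => 8 * Nat.pair i (Nat.pair j k) + RelSym.equivFin r
  | nand φ ψ => 8 * Nat.pair φ.toNat ψ.toNat + 6
  | all φ => 8 * φ.toNat + 7

/-- The formula with a given Gödel number. -/
def ofNat (n : ℕ) : Form :=
  if h : n % 8 < 6 then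
    atom (RelSym.equivFin.symm ⟨n % 8, h⟩) (n / 8).unpair.1 (n / 8).unpair.2.unpair.1
      (n / 8).unpair.2.unpair.2
  else if n % 8 = 6 then nand (ofNat (n / 8).unpair.1) (ofNat (n / 8).unpair.2)
  else all (ofNat (n / 8))
termination_by n
decreasing_by
  · have := Nat.unpair_left_le (n / 8); omega
  · have := Nat.unpair_right_le (n / 8); omega
  · omega

theorem toNat_ofNat (n : ℕ) : (ofNat n).toNat = n := by
  fun_induction ofNat n with
  | case1 n h => simp only [toNat, Equiv.apply_symm_apply, Nat.pair_unpair]; omega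
  | case2 n _ h6 ih₁ ih₂ => simp only [toNat, ih₁, ih₂, Nat.pair_unpair]; omega
  | case3 n h h6 ih => simp only [toNat, ih]; omega

theorem ofNat_toNat (φ : Form) : ofNat φ.toNat = φ := by
  induction φ with
  | atom r i j k =>
    have hr := (RelSym.equivFin r).isLt
    have hmod : toNat (atom r i j k) % 8 = RelSym.equivFin r := by simp only [toNat]; omega
    have hdiv : toNat (atom r i j k) / 8 = Nat.pair i (Nat.pair j k) := by
      simp only [toNat]; omega
    rw [ofNat, dif_pos (hmod ▸ hr)]
    simp [hmod, hdiv]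
  | nand φ ψ ihφ ihψ =>
    have hmod : toNat (nand φ ψ) % 8 = 6 := by simp only [toNat]; omega
    have hdiv : toNat (nand φ ψ) / 8 = Nat.pair φ.toNat ψ.toNat := by simp only [toNat]; omega
    rw [ofNat, dif_neg (by omega), if_pos hmod, hdiv, Nat.unpair_pair, ihφ, ihψ]
  | all φ ih =>
    have hmod : toNat (all φ) % 8 = 7 := by simp only [toNat]; omega
    have hdiv : toNat (all φ) / 8 = φ.toNat := by simp only [toNat]; omega
    rw [ofNat, dif_neg (by omega), if_neg (by omega), hdiv, ih]

/-- Gödel numbering as an equivalence. -/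
def equivNat : Form ≃ ℕ := ⟨toNat, ofNat, ofNat_toNat, toNat_ofNat⟩

instance : Primcodable Form := .ofEquiv ℕ equivNat

theorem primrec_of_toNat {α : Type*} [Primcodable α] {f : α → Form}
    (hf : Primrec fun a => (f a).toNat) : Primrec f :=
  (Primrec.of_equiv_iff equivNat).1 hf

theorem primrec_toNat : Primrec toNat := Primrec.of_equiv (e := equivNat)

theorem primrec_atom {α : Type*} [Primcodable α] {r : α → RelSym} {i j k : α → ℕ}
    (hr : Primrec r) (hi : Primrec i) (hj : Primrec j) (hk : Primrec k) :
    Primrec fun a => atom (r a) (i a) (j a) (k a) :=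
  primrec_of_toNat (Primrec.nat_add.comp (Primrec.nat_mul.comp (Primrec.const 8)
    (Primrec₂.natPair.comp hi (Primrec₂.natPair.comp hj hk)))
    (Primrec.fin_val.comp (Primrec.of_equiv.comp hr)))

theorem primrec_nand : Primrec₂ nand :=
  primrec_of_toNat (Primrec.nat_add.comp (Primrec.nat_mul.comp (Primrec.const 8)
    (Primrec₂.natPair.comp (primrec_toNat.comp Primrec.fst) (primrec_toNat.comp Primrec.snd)))
    (Primrec.const 6))

theorem primrec_all : Primrec all :=
  primrec_of_toNat (Primrec.nat_add.comp (Primrec.nat_mul.comp (Primrec.const 8) primrec_toNat)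
    (Primrec.const 7))

/-- Negation. -/
def neg (φ : Form) : Form := nand φ φ

/-- Conjunction. -/
def and (φ ψ : Form) : Form := neg (nand φ ψ)

/-- Implication. -/
def imp (φ ψ : Form) : Form := nand φ (neg ψ)

/-- Existential quantification. -/
def ex (φ : Form) : Form := neg (all (neg φ))

/-- The formula `xᵢ < xⱼ`. -/
def lt (i j : ℕ) : Form := atom .lt i j i

/-- The formula `xᵢ = xⱼ`. -/
def eq (i j : ℕ) : Form := atom .eq i j i

/-- Extension of a renaming to the scope of a quantifier. -/
def liftVar (ρ : ℕ → ℕ) : ℕ → ℕ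
  | 0 => 0
  | n + 1 => ρ n + 1

/-- Renaming of the free variables. -/
def rename (ρ : ℕ → ℕ) : Form → Form
  | atom r i j k => atom r (ρ i) (ρ j) (ρ k)
  | nand φ ψ => nand (φ.rename ρ) (ψ.rename ρ)
  | all φ => all (φ.rename (liftVar ρ))

/-- A strict bound on the indices of the free variables. -/
def bound : Form → ℕ
  | atom _ i j k => max i (max j k) + 1
  | nand φ ψ => max φ.bound ψ.bound
  | all φ => φ.bound

end Form

end Formulas

section Satisfaction

variable {M : Type*}

/-- A relational structure for `RelSym`; as in `Form`, every relation is ternary. -/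
abbrev RelStr (M : Type*) := RelSym → M → M → M → Prop

/-- The order of a relational structure. -/
abbrev RelStr.Lt (R : RelStr M) (x y : M) : Prop := R .lt x y x

/-- The interpretation of the symbol for equality. -/
abbrev RelStr.Eqv (R : RelStr M) (x y : M) : Prop := R .eq x y x

/-- The environment `v` extended by the value `x` for the innermost variable. -/
def scons (x : M) (v : ℕ → M) : ℕ → M
  | 0 => x
  | n + 1 => v n

@[simp] theorem scons_zero (x : M) (v : ℕ → M) : scons x v 0 = x := rfl

@[simp] theorem scons_succ (x : M) (v : ℕ → M) (n : ℕ) : scons x v (n + 1) = v n := rfl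

/-- Satisfaction of a formula in an environment. -/
def Sat (R : RelStr M) : Form → (ℕ → M) → Prop
  | .atom r i j k, v => R r (v i) (v j) (v k)
  | .nand φ ψ, v => ¬ (Sat R φ v ∧ Sat R ψ v)
  | .all φ, v => ∀ x, Sat R φ (scons x v)

variable {R : RelStr M} {φ ψ : Form} {v : ℕ → M}

@[simp] theorem sat_atom {r : RelSym} {i j k : ℕ} :
    Sat R (.atom r i j k) v ↔ R r (v i) (v j) (v k) := .rfl

@[simp] theorem sat_nand : Sat R (.nand φ ψ) v ↔ ¬ (Sat R φ v ∧ Sat R ψ v) := .rfl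

@[simp] theorem sat_all : Sat R (.all φ) v ↔ ∀ x, Sat R φ (scons x v) := .rfl

@[simp] theorem sat_neg : Sat R φ.neg v ↔ ¬ Sat R φ v := by simp [Form.neg]

@[simp] theorem sat_and : Sat R (φ.and ψ) v ↔ Sat R φ v ∧ Sat R ψ v := by simp [Form.and]

@[simp] theorem sat_imp : Sat R (φ.imp ψ) v ↔ (Sat R φ v → Sat R ψ v) := by simp [Form.imp]

@[simp] theorem sat_ex : Sat R φ.ex v ↔ ∃ x, Sat R φ (scons x v) := by simp [Form.ex]

@[simp] theorem sat_lt {i j : ℕ} : Sat R (.lt i j) v ↔ R.Lt (v i) (v j) := .rfl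

@[simp] theorem sat_eq {i j : ℕ} : Sat R (.eq i j) v ↔ R.Eqv (v i) (v j) := .rfl

theorem sat_rename {ρ : ℕ → ℕ} : Sat R (φ.rename ρ) v ↔ Sat R φ (v ∘ ρ) := by
  induction φ generalizing ρ v with
  | atom r i j k => exact .rfl
  | nand φ ψ ihφ ihψ => simp only [Form.rename, sat_nand, ihφ, ihψ]
  | all φ ih =>
    simp only [Form.rename, sat_all, ih]
    refine forall_congr' fun x => ?_
    rw [show scons x v ∘ Form.liftVar ρ = scons x (v ∘ ρ) by funext n; cases n <;> rfl]

theorem sat_congr_of_lt_bound {v' : ℕ → M} (h : ∀ i < φ.bound, v i = v' i) :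
    Sat R φ v ↔ Sat R φ v' := by
  induction φ generalizing v v' with
  | atom r i j k =>
    simp only [sat_atom]
    rw [h i (by simp [Form.bound]), h j (by simp [Form.bound]), h k (by simp [Form.bound])]
  | nand φ ψ ihφ ihψ =>
    rw [sat_nand, sat_nand, ihφ fun i hi => h i (lt_max_of_lt_left hi),
      ihψ fun i hi => h i (lt_max_of_lt_right hi)]
  | all φ ih =>
    refine forall_congr' fun x => ih fun i hi => ?_
    cases i with
    | zero => rfl
    | succ i => exact h i (i.lt_succ_self.trans hi)

/-- The least number principle, in the form that a universal formula which fails has a least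
counterexample. -/
def LeastCounterexample (R : RelStr M) : Prop :=
  ∀ (φ : Form) (v : ℕ → M), (∃ x, ¬ Sat R φ (scons x v)) →
    ∃ x, ¬ Sat R φ (scons x v) ∧ ∀ z, ¬ Sat R φ (scons z v) → ¬ R.Lt z x

end Satisfaction

section Ultrapower

open Filter

variable {I M : Type*} (U : Ultrafilter I) (R : RelStr M)

/-- The ultrapower of a relational structure, on representatives: since equality is one of the
relations, no quotient has to be taken. -/
def ultrapower : RelStr (I → M) := fun r x y z => ∀ᶠ i in U, R r (x i) (y i) (z i)

variable {U R}

theorem scons_apply_index (x : I → M) (v : ℕ → I → M) (i : I) :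
    (fun k => scons x v k i) = scons (x i) fun k => v k i := by
  funext k; cases k <;> rfl

theorem eventually_exists_iff {P : I → M → Prop} :
    (∀ᶠ i in U, ∃ x, P i x) ↔ ∃ f : I → M, ∀ᶠ i in U, P i (f i) := by
  refine ⟨fun h => ?_, fun ⟨f, hf⟩ => hf.mono fun i hi => ⟨f i, hi⟩⟩
  obtain ⟨_, x₀, -⟩ := h.exists
  have : ∀ i, ∃ x, (∃ y, P i y) → P i x := fun i =>
    (em (∃ y, P i y)).elim (fun ⟨y, hy⟩ => ⟨y, fun _ => hy⟩) fun h => ⟨x₀, fun h' => absurd h' h⟩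
  choose f hf using this
  exact ⟨f, h.mono hf⟩

theorem sat_ultrapower {φ : Form} {v : ℕ → I → M} :
    Sat (ultrapower U R) φ v ↔ ∀ᶠ i in U, Sat R φ fun k => v k i := by
  induction φ generalizing v with
  | atom r i j k => exact .rfl
  | nand φ ψ ihφ ihψ => simp only [sat_nand, ihφ, ihψ, ← eventually_and, Ultrafilter.eventually_not]
  | all φ ih =>
    rw [← not_iff_not, ← Ultrafilter.eventually_not]
    simp only [sat_all, ih, scons_apply_index, not_forall, ← Ultrafilter.eventually_not,
      eventually_exists_iff]

theorem LeastCounterexample.ultrapower (h : LeastCounterexample R) :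
    LeastCounterexample (ultrapower U R) := by
  rintro φ v ⟨y, hy⟩
  simp only [sat_ultrapower, scons_apply_index, ← Ultrafilter.eventually_not] at hy ⊢
  obtain ⟨x, hx⟩ := eventually_exists_iff.1 (hy.mono fun i hi => h φ _ ⟨y i, hi⟩)
  refine ⟨x, hx.mono fun i hi => hi.1, fun z hz => ?_⟩
  rw [RelStr.Lt, Arith.ultrapower, ← Ultrafilter.eventually_not]
  exact (hx.and hz).mono fun i hi => hi.1.2 _ hi.2

-- At the index `i`, the diagonal choice meets as many of the first `i` conditions as possible.
theorem exists_forall_eventually_hyperfilter [Nonempty M] (P : ℕ → ℕ → M → Prop)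
    (h : ∀ n, ∃ y : ℕ → M, ∀ m < n, ∀ᶠ i in hyperfilter ℕ, P m i (y i)) :
    ∃ y : ℕ → M, ∀ m, ∀ᶠ i in hyperfilter ℕ, P m i (y i) := by
  classical
  have diagonal (i : ℕ) : ∃ a, ∀ n ≤ i, (∃ b, ∀ m < n, P m i b) → ∀ m < n, P m i a := by
    let Meets : ℕ → Prop := fun n => ∃ b, ∀ m < n, P m i b
    obtain ⟨a, ha⟩ : Meets (Nat.findGreatest Meets i) :=
      Nat.findGreatest_spec (Nat.zero_le i) ⟨Classical.arbitrary M, by simp⟩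
    exact ⟨a, fun n hn hb m hm => ha m (hm.trans_le (Nat.le_findGreatest hn hb))⟩
  choose y hy using diagonal
  refine ⟨y, fun m => ?_⟩
  obtain ⟨z, hz⟩ := h (m + 1)
  have hall : ∀ᶠ i in hyperfilter ℕ, ∀ k < m + 1, P k i (z i) := by
    simpa using (eventually_all_finset (Finset.range (m + 1)) (p := fun k i => P k i (z i))).2
      (by simpa using hz)
  have hge : ∀ᶠ i in hyperfilter ℕ, m + 1 ≤ i :=
    Nat.hyperfilter_le_atTop (eventually_ge_atTop (m + 1))
  filter_upwards [hall, hge] with i hzi hi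
  exact hy i (m + 1) hi ⟨_, hzi⟩ m m.lt_succ_self

end Ultrapower

section Diagrams

variable {ι κ M N : Type*}

/-- The assertion that a formula holds in the environment listed by a list of names, where the
variables beyond the list get the name `default`. -/
abbrev Assertion (ι : Type*) := Form × List ι

/-- The assertion obtained by renaming the names. -/
def Assertion.map (f : ι → κ) (p : Assertion ι) : Assertion κ := (p.1, p.2.map f)

theorem Assertion.primrec_map [Primcodable ι] [Primcodable κ] {f : ι → κ} (hf : Primrec f) :
    Primrec (Assertion.map f) :=
  Primrec.pair Primrec.fst (Primrec.list_map Primrec.snd (hf.comp Primrec.snd).to₂)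

variable [Inhabited ι] [Inhabited κ] {R : RelStr M} {u : ι → M}

/-- The environment of the values under `u` of a list of names. -/
def look (u : ι → M) (e : List ι) : ℕ → M := fun i => u (e.getD i default)

theorem look_cons (u : ι → M) (x : ι) (e : List ι) : look u (x :: e) = scons (u x) (look u e) := by
  funext i; cases i <;> rfl

theorem look_map {u : κ → M} {f : ι → κ} (hf : f default = default) (e : List ι) :
    look u (e.map f) = look (u ∘ f) e := by
  funext i
  by_cases h : i < e.length <;> simp [look, List.getD, h, hf]

theorem exists_look_eq (v : ℕ → ι) (k : ℕ) : ∃ e : List ι, ∀ i < k, look id e i = v i :=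
  ⟨(List.range k).map v, fun i hi => by simp [look, List.getD, hi]⟩

/-- The complete diagram of a family of elements: the set of the true assertions about it. -/
def diagram (R : RelStr M) (u : ι → M) : Set (Assertion ι) := {p | Sat R p.1 (look u p.2)}

@[simp] theorem mem_diagram {p : Assertion ι} : p ∈ diagram R u ↔ Sat R p.1 (look u p.2) := .rfl

theorem diagram_eq_of_subset {R' : RelStr N} {u' : ι → N} (h : diagram R u ⊆ diagram R' u') :
    diagram R u = diagram R' u' := by
  refine h.antisymm fun p hp => by_contra fun hcon => ?_
  have : (p.1.neg, p.2) ∈ diagram R u := by simpa using hcon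
  have := h this
  simp only [mem_diagram, sat_neg] at this hp
  exact this hp

theorem preimage_map_diagram {u : κ → M} {f : ι → κ} (hf : f default = default) :
    Assertion.map f ⁻¹' diagram R u = diagram R (u ∘ f) := by
  ext p
  simp [Assertion.map, look_map hf]

theorem ScottSet.codeSet_diagram_comp_mem {S : Set (Set ℕ)} (hS : ScottSet S) [Primcodable ι]
    [Primcodable κ] {u : κ → M} (hu : codeSet (diagram R u) ∈ S) {f : ι → κ} (hf : Primrec f)
    (hf₀ : f default = default) : codeSet (diagram R (u ∘ f)) ∈ S :=
  preimage_map_diagram (R := R) (u := u) hf₀ ▸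
    hS.codeSet_preimage_codeSet_mem hu (Assertion.primrec_map hf)

end Diagrams

section Clauses

theorem clauseHolds_cons {α : Type*} {D : Set α} {p : α × Bool} {C : List (α × Bool)} :
    ClauseHolds D (p :: C) ↔ (p.1 ∈ D ↔ p.2 = true) ∨ ClauseHolds D C := by
  simp [ClauseHolds]

theorem not_clauseHolds_nil {α : Type*} {D : Set α} : ¬ ClauseHolds D [] := by
  simp [ClauseHolds]

theorem primrec_list_pair {α γ : Type*} [Primcodable α] [Primcodable γ] {f g : α → γ}
    (hf : Primrec f) (hg : Primrec g) : Primrec fun a => [f a, g a] :=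
  Primrec.list_cons.comp hf (Primrec.list_cons.comp hg (Primrec.const []))

theorem primrec_list_triple {α γ : Type*} [Primcodable α] [Primcodable γ] {f g h : α → γ}
    (hf : Primrec f) (hg : Primrec g) (hh : Primrec h) : Primrec fun a => [f a, g a, h a] :=
  Primrec.list_cons.comp hf (primrec_list_pair hg hh)

theorem primrec_literal {α γ : Type*} [Primcodable α] [Primcodable γ] {φ : α → Form}
    {e : α → List γ} (hφ : Primrec φ) (he : Primrec e) (b : Bool) :
    Primrec fun a => ((φ a, e a), b) :=
  Primrec.pair (Primrec.pair hφ he) (Primrec.const b)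

end Clauses

section Henkin

variable {β : Type*} [Primcodable β]

/-- The name reserved for the least counterexample to the assertion `(φ.all, e)`. -/
def wit (φ : Form) (e : List (ℕ ⊕ β)) : ℕ ⊕ β := .inl (encode (φ, e))

theorem primrec_wit : Primrec₂ (wit (β := β)) :=
  Primrec.sumInl.comp (Primrec.encode.comp (Primrec.pair Primrec.fst Primrec.snd))

theorem encode_lt_encode_of_mem {e : List β} {x : β} (h : x ∈ e) : encode x < encode e := by
  induction e with
  | nil => simp at h
  | cons y l ih =>
    rw [encode_list_cons, Nat.lt_succ_iff]
    rcases List.mem_cons.1 h with rfl | h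
    · exact Nat.left_le_pair _ _
    · exact (ih h).le.trans (Nat.right_le_pair _ _)

-- Names occurring in an assertion are smaller than its code, so that witnesses can be chosen by
-- recursion on codes.
theorem lt_encode_of_inl_mem {φ : Form} {e : List (ℕ ⊕ β)} {k : ℕ} (h : .inl k ∈ e) :
    k < encode (φ, e) := by
  have hk : encode (Sum.inl k : ℕ ⊕ β) = 2 * k := by simp
  have := encode_lt_encode_of_mem h
  have : encode e ≤ encode (φ, e) := Nat.right_le_pair _ _
  omega

variable [Inhabited β]

/-- The conditions on a set of assertions making it the complete diagram of a structure on its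
own names in which `wit φ e` is a least counterexample to `(φ.all, e)`, if there is one. -/
structure IsHenkin (D : Set (Assertion (ℕ ⊕ β))) : Prop where
  nand (φ ψ e) : (.nand φ ψ, e) ∈ D ↔ ¬ ((φ, e) ∈ D ∧ (ψ, e) ∈ D)
  all_elim (φ e x) : (.all φ, e) ∈ D → (φ, x :: e) ∈ D
  all_intro (φ e) : (φ, wit φ e :: e) ∈ D → (.all φ, e) ∈ D
  least (φ e x) : (.lt 0 1, [x, wit φ e]) ∈ D → (φ, x :: e) ∈ D
  atom (r i j k e) : (.atom r i j k, e) ∈ D ↔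
    (.atom r 0 1 2, [e.getD i default, e.getD j default, e.getD k default]) ∈ D

/-- The structure on names determined by the atomic assertions in `D`. -/
def nameStr (D : Set (Assertion β)) : RelStr β := fun r x y z => (.atom r 0 1 2, [x, y, z]) ∈ D

namespace IsHenkin

variable {D : Set (Assertion (ℕ ⊕ β))} {M : Type*} {R : RelStr M}

theorem sat_nameStr (hD : IsHenkin D) {φ : Form} {e : List (ℕ ⊕ β)} :
    Sat (nameStr D) φ (look id e) ↔ (φ, e) ∈ D := by
  induction φ generalizing e with
  | atom r i j k => exact (hD.atom r i j k e).symm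
  | nand φ ψ ihφ ihψ => rw [sat_nand, ihφ, ihψ, hD.nand]
  | all φ ih =>
    have h (x) : Sat (nameStr D) φ (scons x (look id e)) ↔ (φ, x :: e) ∈ D := by
      rw [← ih, look_cons]; rfl
    simp only [sat_all, h]
    exact ⟨fun h => hD.all_intro φ e (h _), fun h x => hD.all_elim φ e x h⟩

theorem diagram_nameStr (hD : IsHenkin D) : diagram (nameStr D) id = D :=
  Set.ext fun _ => hD.sat_nameStr

theorem leastCounterexample_nameStr (hD : IsHenkin D) : LeastCounterexample (nameStr D) := by
  intro φ v hv
  obtain ⟨e, he⟩ := exists_look_eq v φ.bound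
  have h (x) : Sat (nameStr D) φ (scons x v) ↔ (φ, x :: e) ∈ D := by
    rw [← hD.sat_nameStr, look_cons]
    refine sat_congr_of_lt_bound fun i hi => ?_
    cases i with
    | zero => rfl
    | succ i => exact (he i (i.lt_succ_self.trans hi)).symm
  simp only [h] at hv ⊢
  obtain ⟨x, hx⟩ := hv
  refine ⟨wit φ e, fun hw => hx (hD.all_elim φ e x (hD.all_intro φ e hw)), fun z hz hlt => ?_⟩
  exact hz (hD.least φ e z ((hD.atom .lt 0 1 0 [z, wit φ e]).2 hlt))

theorem of_diagram {u : ℕ ⊕ β → M}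
    (hu : ∀ φ e, (∃ x, ¬ Sat R φ (scons x (look u e))) →
      ¬ Sat R φ (scons (u (wit φ e)) (look u e)) ∧
        ∀ z, ¬ Sat R φ (scons z (look u e)) → ¬ R.Lt z (u (wit φ e))) :
    IsHenkin (diagram R u) where
  nand _ _ _ := .rfl
  all_elim φ e x h := by
    rw [mem_diagram, look_cons]
    exact h (u x)
  all_intro φ e h := by
    rw [mem_diagram, look_cons] at h
    exact by_contra fun hcon => (hu φ e (not_forall.1 hcon)).1 h
  least φ e x h := by
    rw [mem_diagram, look_cons]
    exact by_contra fun hcon => (hu φ e ⟨_, hcon⟩).2 _ hcon h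
  atom _ _ _ _ _ := .rfl

theorem exists_extension (hR : LeastCounterexample R) (w : β → M) :
    ∃ u : ℕ ⊕ β → M, u ∘ Sum.inr = w ∧ IsHenkin (diagram R u) := by
  have least (φ : Form) (v : ℕ → M) : ∃ x, (∃ y, ¬ Sat R φ (scons y v)) →
      ¬ Sat R φ (scons x v) ∧ ∀ z, ¬ Sat R φ (scons z v) → ¬ R.Lt z x :=
    (em (∃ y, ¬ Sat R φ (scons y v))).elim (fun h => (hR φ v h).imp fun _ hx _ => hx)
      fun h => ⟨w default, fun h' => absurd h' h⟩
  choose pick hpick using least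
  let value (k : ℕ) (prev : (j : ℕ) → j < k → M) : M :=
    ((decode k : Option (Assertion (ℕ ⊕ β))).map fun p => pick p.1
      (look (Sum.elim (fun j => if h : j < k then prev j h else w default) w) p.2)).getD (w default)
  let f : ℕ → M := Nat.lt_wfRel.wf.fix value
  have hf (k : ℕ) : f k = value k fun j _ => f j := Nat.lt_wfRel.wf.fix_eq value k
  refine ⟨Sum.elim f w, rfl, of_diagram fun φ e h => ?_⟩
  have hwit : Sum.elim f w (wit φ e) = pick φ (look (Sum.elim f w) e) := by
    rw [wit, Sum.elim_inl, hf]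
    simp only [value, encodek, Option.map_some, Option.getD_some]
    congr 1
    funext i
    rcases h : e.getD i default with k | b
    · have hk : .inl k ∈ e := by
        by_cases hi : i < e.length
        · rw [List.getD_eq_getElem _ _ hi] at h
          exact h ▸ List.getElem_mem hi
        · rw [List.getD_eq_default _ _ (not_lt.1 hi)] at h
          cases h
      simp only [look, h, Sum.elim_inl, dif_pos (lt_encode_of_inl_mem hk)]
    · simp only [look, h, Sum.elim_inr]
  rw [hwit]
  exact hpick φ _ h

end IsHenkin

section Clauses

/-- Indices for the clauses axiomatizing `IsHenkin`: instances for `nand`, for `all` and for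
atomic formulas. -/
abbrev HenkinIndex (β : Type*) :=
  (Form × Form × List (ℕ ⊕ β)) ⊕ (Form × (ℕ ⊕ β) × List (ℕ ⊕ β)) ⊕
    (RelSym × ℕ × ℕ × ℕ × List (ℕ ⊕ β))

/-- The clauses axiomatizing `IsHenkin`. -/
def henkinClauses : HenkinIndex β → List (List (Assertion (ℕ ⊕ β) × Bool))
  | .inl (φ, ψ, e) =>
    [ [((.nand φ ψ, e), false), ((φ, e), false), ((ψ, e), false)],
      [((.nand φ ψ, e), true), ((φ, e), true)],
      [((.nand φ ψ, e), true), ((ψ, e), true)] ]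
  | .inr (.inl (φ, x, e)) =>
    [ [((.all φ, e), false), ((φ, x :: e), true)],
      [((φ, wit φ e :: e), false), ((.all φ, e), true)],
      [((.lt 0 1, [x, wit φ e]), false), ((φ, x :: e), true)] ]
  | .inr (.inr (r, i, j, k, e)) =>
    let a : Assertion (ℕ ⊕ β) :=
      (.atom r 0 1 2, [e.getD i default, e.getD j default, e.getD k default])
    [ [((.atom r i j k, e), false), (a, true)], [((.atom r i j k, e), true), (a, false)] ]

theorem isHenkin_iff_clauseHolds {D : Set (Assertion (ℕ ⊕ β))} :
    IsHenkin D ↔ ∀ i : HenkinIndex β, ∀ C ∈ henkinClauses i, ClauseHolds D C := by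
  have nand (φ ψ e) : (∀ C ∈ henkinClauses (.inl (φ, ψ, e)), ClauseHolds D C) ↔
      ((.nand φ ψ, e) ∈ D ↔ ¬ ((φ, e) ∈ D ∧ (ψ, e) ∈ D)) := by
    simp only [henkinClauses, List.mem_cons, List.not_mem_nil, or_false, forall_eq_or_imp,
      forall_eq, clauseHolds_cons, not_clauseHolds_nil, Bool.false_eq_true, iff_false, iff_true]
    tauto
  have all (φ x e) : (∀ C ∈ henkinClauses (.inr (.inl (φ, x, e))), ClauseHolds D C) ↔
      ((.all φ, e) ∈ D → (φ, x :: e) ∈ D) ∧ ((φ, wit φ e :: e) ∈ D → (.all φ, e) ∈ D) ∧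
        ((.lt 0 1, [x, wit φ e]) ∈ D → (φ, x :: e) ∈ D) := by
    simp only [henkinClauses, List.mem_cons, List.not_mem_nil, or_false, forall_eq_or_imp,
      forall_eq, clauseHolds_cons, not_clauseHolds_nil, Bool.false_eq_true, iff_false, iff_true]
    tauto
  have atom (r i j k e) : (∀ C ∈ henkinClauses (.inr (.inr (r, i, j, k, e))), ClauseHolds D C) ↔
      ((.atom r i j k, e) ∈ D ↔
        (.atom r 0 1 2, [e.getD i default, e.getD j default, e.getD k default]) ∈ D) := by
    simp only [henkinClauses, List.mem_cons, List.not_mem_nil, or_false, forall_eq_or_imp,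
      forall_eq, clauseHolds_cons, not_clauseHolds_nil, Bool.false_eq_true, iff_false, iff_true]
    tauto
  refine ⟨fun h => ?_, fun h => ⟨fun φ ψ e => (nand φ ψ e).1 (h _), fun φ e x =>
    ((all φ x e).1 (h _)).1, fun φ e => ((all φ default e).1 (h _)).2.1, fun φ e x =>
    ((all φ x e).1 (h _)).2.2, fun r i j k e => (atom r i j k e).1 (h _)⟩⟩
  rintro (⟨φ, ψ, e⟩ | ⟨φ, x, e⟩ | ⟨r, i, j, k, e⟩)
  · exact (nand φ ψ e).2 (h.nand φ ψ e)
  · exact (all φ x e).2 ⟨h.all_elim φ e x, h.all_intro φ e, h.least φ e x⟩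
  · exact (atom r i j k e).2 (h.atom r i j k e)

theorem primrec_henkinClauses_nand :
    Primrec fun x : Form × Form × List (ℕ ⊕ β) => henkinClauses (.inl x) := by
  have hφ : Primrec fun x : Form × Form × List (ℕ ⊕ β) => x.1 := Primrec.fst
  have hψ : Primrec fun x : Form × Form × List (ℕ ⊕ β) => x.2.1 := Primrec.fst.comp Primrec.snd
  have he : Primrec fun x : Form × Form × List (ℕ ⊕ β) => x.2.2 := Primrec.snd.comp Primrec.snd
  have hnand := Form.primrec_nand.comp hφ hψ
  exact primrec_list_triple
    (primrec_list_triple (primrec_literal hnand he false) (primrec_literal hφ he false)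
      (primrec_literal hψ he false))
    (primrec_list_pair (primrec_literal hnand he true) (primrec_literal hφ he true))
    (primrec_list_pair (primrec_literal hnand he true) (primrec_literal hψ he true))

theorem primrec_henkinClauses_all :
    Primrec fun x : Form × (ℕ ⊕ β) × List (ℕ ⊕ β) => henkinClauses (.inr (.inl x)) := by
  have hφ : Primrec fun x : Form × (ℕ ⊕ β) × List (ℕ ⊕ β) => x.1 := Primrec.fst
  have hx : Primrec fun x : Form × (ℕ ⊕ β) × List (ℕ ⊕ β) => x.2.1 :=
    Primrec.fst.comp Primrec.snd
  have he : Primrec fun x : Form × (ℕ ⊕ β) × List (ℕ ⊕ β) => x.2.2 :=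
    Primrec.snd.comp Primrec.snd
  have hall := Form.primrec_all.comp hφ
  have hxe := Primrec.list_cons.comp hx he
  have hwit := primrec_wit.comp hφ he
  exact primrec_list_triple
    (primrec_list_pair (primrec_literal hall he false) (primrec_literal hφ hxe true))
    (primrec_list_pair (primrec_literal hφ (Primrec.list_cons.comp hwit he) false)
      (primrec_literal hall he true))
    (primrec_list_pair (primrec_literal (Primrec.const _) (primrec_list_pair hx hwit) false)
      (primrec_literal hφ hxe true))

theorem primrec_henkinClauses_atom :
    Primrec fun x : RelSym × ℕ × ℕ × ℕ × List (ℕ ⊕ β) => henkinClauses (.inr (.inr x)) := by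
  have hr : Primrec fun x : RelSym × ℕ × ℕ × ℕ × List (ℕ ⊕ β) => x.1 := Primrec.fst
  have tail : Primrec fun x : RelSym × ℕ × ℕ × ℕ × List (ℕ ⊕ β) => x.2 := Primrec.snd
  have hi := Primrec.fst.comp tail
  have hj := Primrec.fst.comp (Primrec.snd.comp tail)
  have hk := Primrec.fst.comp (Primrec.snd.comp (Primrec.snd.comp tail))
  have he := Primrec.snd.comp (Primrec.snd.comp (Primrec.snd.comp tail))
  have hatom := Form.primrec_atom hr hi hj hk
  have hatom' := Form.primrec_atom hr (Primrec.const 0) (Primrec.const 1) (Primrec.const 2)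
  have hargs := primrec_list_triple ((Primrec.list_getD default).comp he hi)
    ((Primrec.list_getD default).comp he hj) ((Primrec.list_getD default).comp he hk)
  exact primrec_list_pair
    (primrec_list_pair (primrec_literal hatom he false) (primrec_literal hatom' hargs true))
    (primrec_list_pair (primrec_literal hatom he true) (primrec_literal hatom' hargs false))

theorem primrec_henkinClauses : Primrec (henkinClauses (β := β)) :=
  (Primrec.sumCasesOn Primrec.id (primrec_henkinClauses_nand.comp Primrec.snd).to₂
    (Primrec.sumCasesOn Primrec.snd
      (primrec_henkinClauses_all.comp Primrec.snd).to₂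
      (primrec_henkinClauses_atom.comp Primrec.snd).to₂).to₂).of_eq fun i => by
    rcases i with _ | _ | _ <;> rfl

end Clauses

end Henkin

section Existence

variable {β : Type*} [Primcodable β] [Inhabited β] {S : Set (Set ℕ)} {Z : Set ℕ}

theorem ScottSet.exists_isHenkin (hS : ScottSet S) (hZ : Z ∈ S)
    {F : ℕ → Bool → List (Assertion (ℕ ⊕ β))} (hF : Primrec₂ F)
    (h : ∀ N, ∃ D, IsHenkin D ∧ ∀ n < N, ∀ p ∈ F n (chi Z n), p ∈ D) :
    ∃ D, codeSet D ∈ S ∧ IsHenkin D ∧ ∀ n, ∀ p ∈ F n (chi Z n), p ∈ D := by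
  let K (n : ℕ) (b : Bool) : List (List (Assertion (ℕ ⊕ β) × Bool)) :=
    ((decode n).map henkinClauses).getD [] ++ (F n b).map fun p => [(p, true)]
  have hK : Primrec₂ K := Primrec.list_append.comp
    (Primrec.option_getD.comp (Primrec.option_map (Primrec.decode.comp Primrec.fst)
      (primrec_henkinClauses.comp Primrec.snd).to₂) (Primrec.const []))
    (Primrec.list_map hF (Primrec.list_cons.comp (Primrec.pair Primrec.snd (Primrec.const true))
      (Primrec.const [])).to₂)
  have unit (D : Set (Assertion (ℕ ⊕ β))) (p) : ClauseHolds D [(p, true)] ↔ p ∈ D := by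
    simp [ClauseHolds]
  obtain ⟨D, hDS, hD⟩ := hS.exists_valuation hZ hK fun N => by
    obtain ⟨D, hD, hFD⟩ := h N
    refine ⟨D, fun n hn C hC => ?_⟩
    rcases List.mem_append.1 hC with hC | hC
    · cases hi : (decode n : Option (HenkinIndex β)) with
      | none => simp [hi] at hC
      | some i => exact isHenkin_iff_clauseHolds.1 hD i C (by simpa [hi] using hC)
    · obtain ⟨p, hp, rfl⟩ := List.mem_map.1 hC
      exact (unit D p).2 (hFD n hn p hp)
  refine ⟨D, hDS, isHenkin_iff_clauseHolds.2 fun i C hC => ?_, fun n p hp => ?_⟩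
  · exact hD (encode i) C (List.mem_append_left _ (by simpa using hC))
  · exact (unit D p).1 (hD n _ (List.mem_append_right _ (List.mem_map_of_mem hp)))

theorem ScottSet.exists_diagram (hS : ScottSet S) (hZ : Z ∈ S)
    {F : ℕ → Bool → List (Assertion β)} (hF : Primrec₂ F)
    (h : ∀ N, ∃ (M : Type*) (R : RelStr M) (w : β → M), LeastCounterexample R ∧
      ∀ n < N, ∀ p ∈ F n (chi Z n), p ∈ diagram R w) :
    ∃ (R : RelStr (ℕ ⊕ β)) (w : β → ℕ ⊕ β), LeastCounterexample R ∧
      codeSet (diagram R w) ∈ S ∧ ∀ n, ∀ p ∈ F n (chi Z n), p ∈ diagram R w := by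
  have hF' : Primrec₂ fun n b => (F n b).map (Assertion.map (Sum.inr (α := ℕ))) :=
    Primrec.list_map hF ((Assertion.primrec_map Primrec.sumInr).comp Primrec.snd).to₂
  obtain ⟨D, hDS, hD, hDF⟩ := hS.exists_isHenkin hZ hF' fun N => by
    obtain ⟨M, R, w, hR, hw⟩ := h N
    obtain ⟨u, rfl, hu⟩ := IsHenkin.exists_extension hR w
    refine ⟨_, hu, fun n hn p hp => ?_⟩
    obtain ⟨q, hq, rfl⟩ := List.mem_map.1 hp
    have := hw n hn q hq
    rwa [← preimage_map_diagram (u := u) (f := Sum.inr) rfl] at this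
  rw [← hD.diagram_nameStr] at hDS
  refine ⟨nameStr D, Sum.inr, hD.leastCounterexample_nameStr,
    hS.codeSet_diagram_comp_mem hDS Primrec.sumInr rfl, fun n p hp => ?_⟩
  have := hDF n _ (List.mem_map_of_mem hp)
  rw [← hD.diagram_nameStr] at this
  exact (preimage_map_diagram (R := nameStr D) (u := id) (f := Sum.inr) rfl).subset this

end Existence

section Axioms

variable {M : Type*} {R : RelStr M}

/-- Being zero in a relational structure. -/
abbrev RelStr.IsZero (R : RelStr M) (x : M) : Prop := R .zero x x x

/-- Being one in a relational structure. -/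
abbrev RelStr.IsOne (R : RelStr M) (x : M) : Prop := R .one x x x

/-- The axioms of arithmetic without induction, for a relational structure: equality is a
congruence, the remaining relations are graphs of operations, and the usual recursive laws hold. -/
structure IsArith (R : RelStr M) : Prop where
  eq_refl x : R.Eqv x x
  eq_symm x y : R.Eqv x y → R.Eqv y x
  eq_trans x y z : R.Eqv x y → R.Eqv y z → R.Eqv x z
  congr r x x' y y' z z' : R.Eqv x x' → R.Eqv y y' → R.Eqv z z' → R r x y z → R r x' y' z'
  add_total x y : ∃ z, R .add x y z
  add_unique x y z z' : R .add x y z → R .add x y z' → R.Eqv z z'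
  mul_total x y : ∃ z, R .mul x y z
  mul_unique x y z z' : R .mul x y z → R .mul x y z' → R.Eqv z z'
  zero_total : ∃ z, R.IsZero z
  zero_unique z z' : R.IsZero z → R.IsZero z' → R.Eqv z z'
  one_total : ∃ z, R.IsOne z
  one_unique z z' : R.IsOne z → R.IsOne z' → R.Eqv z z'
  add_zero x o : R.IsZero o → R .add x o x
  add_succ x y o a b c : R.IsOne o → R .add y o a → R .add x a b → R .add x y c → R .add c o b
  mul_zero x o : R.IsZero o → R .mul x o o
  mul_succ x y o a b c : R.IsOne o → R .add y o a → R .mul x a b → R .mul x y c → R .add c x b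
  not_lt_zero x o : R.IsZero o → ¬ R.Lt x o
  lt_succ x y o a : R.IsOne o → R .add y o a → R.Lt x a → ¬ R.Lt x y → R.Eqv x y
  lt_succ_of_lt x y o a : R.IsOne o → R .add y o a → R.Lt x y → R.Lt x a
  lt_succ_of_eq x y o a : R.IsOne o → R .add y o a → R.Eqv x y → R.Lt x a
  succ_ne_zero x o a : R.IsOne o → R .add x o a → ¬ R.IsZero a
  succ_inj x y o a : R.IsOne o → R .add x o a → R .add y o a → R.Eqv x y
  exists_pred x : ¬ R.IsZero x → ∃ y o, R.IsOne o ∧ R .add y o x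

namespace Form

/-- The formula `xᵢ = 0`. -/
def isZero (i : ℕ) : Form := atom .zero i i i

/-- The formula `xᵢ = 1`. -/
def isOne (i : ℕ) : Form := atom .one i i i

/-- A formula prefixed by `n` universal quantifiers. -/
def alls : ℕ → Form → Form
  | 0, φ => φ
  | n + 1, φ => alls n φ.all

/-- The axioms `IsArith` as first-order sentences. -/
def arithAxioms : List Form :=
  [alls 1 (eq 0 0),
   alls 2 (imp (eq 1 0) (eq 0 1)),
   alls 3 (imp (eq 2 1) (imp (eq 1 0) (eq 2 0))),
   alls 2 (ex (atom .add 2 1 0)),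
   alls 4 (imp (atom .add 3 2 1) (imp (atom .add 3 2 0) (eq 1 0))),
   alls 2 (ex (atom .mul 2 1 0)),
   alls 4 (imp (atom .mul 3 2 1) (imp (atom .mul 3 2 0) (eq 1 0))),
   ex (isZero 0),
   alls 2 (imp (isZero 1) (imp (isZero 0) (eq 1 0))),
   ex (isOne 0),
   alls 2 (imp (isOne 1) (imp (isOne 0) (eq 1 0))),
   alls 2 (imp (isZero 0) (atom .add 1 0 1)),
   alls 6 (imp (isOne 3) (imp (atom .add 4 3 2) (imp (atom .add 5 2 1) (imp (atom .add 5 4 0)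
    (atom .add 0 3 1))))),
   alls 2 (imp (isZero 0) (atom .mul 1 0 0)),
   alls 6 (imp (isOne 3) (imp (atom .add 4 3 2) (imp (atom .mul 5 2 1) (imp (atom .mul 5 4 0)
    (atom .add 0 5 1))))),
   alls 2 (imp (isZero 0) (neg (lt 1 0))),
   alls 4 (imp (isOne 1) (imp (atom .add 2 1 0) (imp (lt 3 0) (imp (neg (lt 3 2)) (eq 3 2))))),
   alls 4 (imp (isOne 1) (imp (atom .add 2 1 0) (imp (lt 3 2) (lt 3 0)))),
   alls 4 (imp (isOne 1) (imp (atom .add 2 1 0) (imp (eq 3 2) (lt 3 0)))),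
   alls 3 (imp (isOne 1) (imp (atom .add 2 1 0) (neg (isZero 0)))),
   alls 4 (imp (isOne 1) (imp (atom .add 3 1 0) (imp (atom .add 2 1 0) (eq 3 2)))),
   alls 1 (imp (neg (isZero 0)) (ex (ex (and (isOne 0) (atom .add 1 0 2)))))] ++
  [.add, .mul, .lt, .eq, .zero, .one].map fun r => alls 6 (imp (eq 5 4) (imp (eq 3 2)
    (imp (eq 1 0) (imp (atom r 5 3 1) (atom r 4 2 0)))))

end Form

theorem sat_arithAxioms {v : ℕ → M} : (∀ φ ∈ Form.arithAxioms, Sat R φ v) ↔ IsArith R := by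
  have all_relSym (P : RelSym → Prop) : (∀ r ∈ [RelSym.add, .mul, .lt, .eq, .zero, .one], P r) ↔
      ∀ r, P r := ⟨fun h r => h r (by cases r <;> simp), fun h r _ => h r⟩
  rw [Form.arithAxioms, List.forall_mem_append, List.forall_mem_map, all_relSym]
  simp only [List.forall_mem_cons, List.not_mem_nil, Form.alls, Form.isZero, Form.isOne, sat_all,
    sat_imp, sat_neg, sat_ex, sat_and, sat_atom, sat_eq, sat_lt, scons_zero, scons_succ,
    IsEmpty.forall_iff, and_true, implies_true]
  constructor
  · rintro ⟨⟨h1, h2, h3, h4, h5, h6, h7, h8, h9, h10, h11, h12, h13, h14, h15, h16, h17, h18, h19,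
      h20, h21, h22⟩, h⟩
    exact ⟨h1, h2, h3, h, h4, h5, h6, h7, h8, h9, h10, h11, h12, h13, h14, h15, h16, h17, h18, h19,
      h20, h21, h22⟩
  · rintro ⟨h1, h2, h3, h, h4, h5, h6, h7, h8, h9, h10, h11, h12, h13, h14, h15, h16, h17, h18, h19,
      h20, h21, h22⟩
    exact ⟨⟨h1, h2, h3, h4, h5, h6, h7, h8, h9, h10, h11, h12, h13, h14, h15, h16, h17, h18, h19,
      h20, h21, h22⟩, h⟩

/-- The standard model. -/
def natStr : RelStr ℕ := fun r x y z =>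
  match r with
  | .add => x + y = z
  | .mul => x * y = z
  | .lt => x < y
  | .eq => x = y
  | .zero => x = 0
  | .one => x = 1

theorem isArith_natStr : IsArith natStr := by
  constructor <;> simp only [natStr]
  case congr => rintro r x x' y y' z z' rfl rfl rfl h; exact h
  case add_succ => rintro x y o a b c rfl rfl rfl rfl; omega
  case mul_succ => rintro x y o a b c rfl rfl rfl rfl; ring
  case exists_pred => exact fun x hx => ⟨x - 1, 1, rfl, by omega⟩
  all_goals grind

theorem leastCounterexample_natStr : LeastCounterexample natStr := by
  classical
  intro φ v h
  exact ⟨Nat.find h, Nat.find_spec h, fun z hz => not_lt.2 (Nat.find_min' h hz)⟩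

end Axioms

section BinaryDigits

variable {M : Type*} {R : RelStr M}

/-- The formula saying that, for `x₁ = 2 ^ i` and `x₂ = 2 ^ (i + 1)`, the `i`-th binary digit of
`x₀` is one. -/
def Form.digit : Form :=
  ex (ex (ex (ex (and (atom .mul 3 6 1) (and (atom .add 5 2 0) (and (atom .add 1 0 4)
    (lt 2 5)))))))

/-- For `p = 2 ^ i` and `q = 2 ^ (i + 1)`, the `i`-th binary digit of `y` is one. -/
def Dig (R : RelStr M) (y p q : M) : Prop :=
  ∃ u t a b, R .mul u q a ∧ R .add p t b ∧ R .add a b y ∧ R.Lt t p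

@[simp] theorem sat_digit {v : ℕ → M} : Sat R .digit v ↔ Dig R (v 0) (v 1) (v 2) := by
  simp [Form.digit, Dig]

theorem dig_natStr {y i : ℕ} : Dig natStr y (2 ^ i) (2 ^ (i + 1)) ↔ y.testBit i = true := by
  rw [Nat.testBit_eq_decide_div_mod_eq, decide_eq_true_iff]
  have hp : 0 < 2 ^ i := by positivity
  constructor
  · rintro ⟨u, t, _, _, rfl, rfl, rfl, ht⟩
    have : u * 2 ^ (i + 1) + (2 ^ i + t) = t + 2 ^ i * (2 * u + 1) := by ring
    rw [this, Nat.add_mul_div_left _ _ hp, Nat.div_eq_of_lt ht]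
    omega
  · intro h
    refine ⟨y / 2 ^ i / 2, y % 2 ^ i, _, _, rfl, rfl, ?_, Nat.mod_lt _ hp⟩
    have hy := Nat.div_add_mod y (2 ^ i)
    have hodd : y / 2 ^ i = 2 * (y / 2 ^ i / 2) + 1 := by omega
    generalize y / 2 ^ i / 2 = k at *
    rw [hodd] at hy
    simp only [natStr, pow_succ]
    linarith

/-- Relative to the numerals `num`, the `j`-th binary digit of `a` is `b`, and `a` is not the
numeral `j`. -/
def CodesBit (R : RelStr M) (num : ℕ → M) (a : M) (j : ℕ) (b : Bool) : Prop :=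
  (Dig R a (num (2 ^ j)) (num (2 ^ (j + 1))) ↔ b = true) ∧ ¬ R.Eqv a (num j)

theorem codesBit_natStr {a j : ℕ} (h : j < a) : CodesBit natStr id a j (a.testBit j) :=
  ⟨dig_natStr, h.ne'⟩

variable {ι : Type*}

/-- The assertions expressing `CodesBit` for the element named `x` and the numerals named `ν`. -/
def codeFacts (x : ι) (ν : ℕ → ι) (j : ℕ) (b : Bool) : List (Assertion ι) :=
  [(bif b then .digit else .neg .digit, [x, ν (2 ^ j), ν (2 ^ (j + 1))]),
    (.neg (.eq 0 1), [x, ν j])]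

theorem codeFacts_subset_diagram [Inhabited ι] {u : ι → M} {x : ι} {ν : ℕ → ι} {j : ℕ} {b : Bool} :
    (∀ p ∈ codeFacts x ν j b, p ∈ diagram R u) ↔ CodesBit R (u ∘ ν) (u x) j b := by
  cases b <;> simp [codeFacts, CodesBit, look]

theorem primrec_two_pow : Primrec fun n : ℕ => 2 ^ n := by
  refine (Primrec.nat_rec' Primrec.id (Primrec.const 1) (Primrec.nat_mul.comp
    (Primrec.snd.comp Primrec.snd) (Primrec.const 2)).to₂).of_eq fun n => ?_
  induction n with
  | zero => rfl
  | succ n ih => simp only [id, pow_succ] at ih ⊢; rw [← ih]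

theorem primrec_testBit : Primrec₂ Nat.testBit := by
  refine (Primrec.eq.comp (Primrec.nat_mod.comp (Primrec.nat_div.comp Primrec.fst
    (primrec_two_pow.comp Primrec.snd)) (Primrec.const 2)) (Primrec.const 1)).decide.of_eq
    fun p => ?_
  rw [Nat.testBit_eq_decide_div_mod_eq]

theorem primrec_codeFacts [Primcodable ι] {α : Type*} [Primcodable α] {x : α → ι} {ν : ℕ → ι}
    {j : α → ℕ} {b : α → Bool} (hx : Primrec x) (hν : Primrec ν) (hj : Primrec j)
    (hb : Primrec b) : Primrec fun a => codeFacts (x a) ν (j a) (b a) :=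
  primrec_list_pair
    (Primrec.pair (Primrec.cond hb (Primrec.const _) (Primrec.const _))
      (primrec_list_triple hx (hν.comp (primrec_two_pow.comp hj))
        (hν.comp (primrec_two_pow.comp (Primrec.succ.comp hj)))))
    (Primrec.pair (Primrec.const _) (primrec_list_pair hx (hν.comp hj)))

end BinaryDigits

section Numerals

variable {M : Type*} {R : RelStr M} {num : ℕ → M}

/-- The sequence `num` behaves like the sequence of numerals. -/
structure IsNum (R : RelStr M) (num : ℕ → M) : Prop where
  zero : R.IsZero (num 0)
  one : R.IsOne (num 1)
  succ a : R .add (num a) (num 1) (num (a + 1))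
  codesBit a : ∀ j < a, CodesBit R num (num a) j (a.testBit j)

theorem isNum_natStr : IsNum natStr id := ⟨rfl, rfl, fun _ => rfl, fun _ _ => codesBit_natStr⟩

/-- The `n`-th part of an axiomatization of `IsArith` and `IsNum`. -/
def numFacts (n : ℕ) : List (Assertion ℕ) :=
  Form.arithAxioms.map (·, []) ++
    [(.isZero 0, [0]), (.isOne 0, [1]), (.atom .add 0 1 2, [n, 1, n + 1])] ++
    (List.range n).flatMap fun j => codeFacts n id j (n.testBit j)

theorem primrec_numFacts : Primrec numFacts :=
  Primrec.list_append.comp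
    (Primrec.list_append.comp (Primrec.const _)
      (primrec_list_triple (Primrec.const _) (Primrec.const _)
        (Primrec.pair (Primrec.const _)
          (primrec_list_triple Primrec.id (Primrec.const 1) Primrec.succ))))
    (Primrec.list_flatMap Primrec.list_range
      (primrec_codeFacts Primrec.fst Primrec.id Primrec.snd primrec_testBit).to₂)

theorem numFacts_subset_diagram :
    (∀ n, ∀ p ∈ numFacts n, p ∈ diagram R num) ↔ IsArith R ∧ IsNum R num := by
  have h (n) : (∀ p ∈ numFacts n, p ∈ diagram R num) ↔ (IsArith R ∧ R.IsZero (num 0) ∧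
      R.IsOne (num 1) ∧ R .add (num n) (num 1) (num (n + 1))) ∧
      ∀ j < n, CodesBit R num (num n) j (n.testBit j) := by
    rw [numFacts, List.forall_mem_append, List.forall_mem_append, List.forall_mem_map,
      List.forall_mem_flatMap]
    refine and_congr (and_congr (sat_arithAxioms (v := look num [])) ?_) (forall_congr' fun j => ?_)
    · simp [look, Form.isZero, Form.isOne]
    · rw [List.mem_range, codeFacts_subset_diagram, Function.comp_id]
  simp only [h]
  exact ⟨fun h => ⟨(h 0).1.1, (h 0).1.2.1, (h 0).1.2.2.1, fun a => (h a).1.2.2.2, fun a => (h a).2⟩,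
    fun ⟨hA, hN⟩ n => ⟨⟨hA, hN.zero, hN.one, hN.succ n⟩, hN.codesBit n⟩⟩

theorem ScottSet.exists_base {S : Set (Set ℕ)} (hS : ScottSet S) :
    ∃ (M : Type) (R : RelStr M) (num : ℕ → M), LeastCounterexample R ∧ IsArith R ∧ IsNum R num ∧
      codeSet (diagram R num) ∈ S := by
  obtain ⟨Z, hZ⟩ := hS.1
  obtain ⟨R, num, hR, hmem, hnum⟩ := hS.exists_diagram hZ (F := fun n _ => numFacts n)
    (primrec_numFacts.comp Primrec.fst) fun _ => ⟨ℕ, natStr, id, leastCounterexample_natStr,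
      fun n _ => numFacts_subset_diagram.2 ⟨isArith_natStr, isNum_natStr⟩ n⟩
  obtain ⟨hA, hN⟩ := numFacts_subset_diagram.1 hnum
  exact ⟨_, R, num, hR, hA, hN, hmem⟩

end Numerals

section Adjunction

variable {M N α κ : Type*} {R : RelStr M} {R' : RelStr N}

/-- The family `w` with one more element `y` adjoined, under the name `.inl ()`. -/
def adjoin (y : M) (w : α → M) : Unit ⊕ α → M := Sum.elim (fun _ => y) w

theorem adjoin_eta (u : Unit ⊕ α → M) : adjoin (u (.inl ())) (u ∘ Sum.inr) = u := by
  funext x; rcases x with _ | _ <;> rfl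

/-- The conjunction of a list of formulas. -/
def Form.conj (l : List Form) : Form := l.foldr .and (.imp (.eq 0 0) (.eq 0 0))

@[simp] theorem sat_conj {v : ℕ → M} {l : List Form} :
    Sat R (.conj l) v ↔ ∀ φ ∈ l, Sat R φ v := by
  induction l with
  | nil => simp [Form.conj]
  | cons φ l ih => simpa [Form.conj] using fun _ => ih

variable [Encodable α] [Inhabited α]

/-- The environment in which the variable `k` stands for the element named by the code `k`. -/
def env (w : α → M) : ℕ → M := fun k => w ((decode k).getD default)

/-- The formula expressing an assertion about `adjoin y w` in the environment
`scons y (env w)`. -/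
def openForm (p : Assertion (Unit ⊕ α)) : Form :=
  p.1.rename fun i => (p.2.getD i default).elim (fun _ => 0) fun a => encode a + 1

theorem sat_openForm {p : Assertion (Unit ⊕ α)} {y : M} {w : α → M} :
    Sat R (openForm p) (scons y (env w)) ↔ p ∈ diagram R (adjoin y w) := by
  rw [openForm, sat_rename, mem_diagram]
  refine iff_of_eq (congrArg _ (funext fun i => ?_))
  rw [look, Function.comp]
  rcases p.2.getD i default with _ | a
  · rfl
  · simp [env, adjoin]

/-- The assertion that a formula holds in the environment `env w`. -/
def closedAssertion (φ : Form) : Assertion α :=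
  (φ, (List.range φ.bound).map fun k => (decode k).getD default)

theorem closedAssertion_mem_diagram {φ : Form} {w : α → M} :
    closedAssertion φ ∈ diagram R w ↔ Sat R φ (env w) :=
  sat_congr_of_lt_bound fun i hi => by
    have hi : i < φ.bound := hi
    simp [look, closedAssertion, env, hi]

theorem exists_subset_diagram_adjoin {w : α → M} {w' : α → N} (h : diagram R' w' ⊆ diagram R w)
    {y' : N} (s : Finset (Assertion (Unit ⊕ α))) (hs : ↑s ⊆ diagram R' (adjoin y' w')) :
    ∃ y, ↑s ⊆ diagram R (adjoin y w) := by
  have hex : closedAssertion (.ex (.conj (s.toList.map openForm))) ∈ diagram R' w' := by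
    rw [closedAssertion_mem_diagram, sat_ex]
    exact ⟨y', by simpa only [sat_conj, List.forall_mem_map, Finset.mem_toList, sat_openForm]⟩
  have := h hex
  simp only [closedAssertion_mem_diagram, sat_ex, sat_conj, List.forall_mem_map, Finset.mem_toList,
    sat_openForm] at this
  exact this

end Adjunction

section Saturation

open Filter

variable {M N α κ : Type*} {R : RelStr M} {R' : RelStr N}

/-- Every countable set of formulas in one variable, with parameters, that is finitely
satisfiable is satisfiable. -/
def CountablySaturated (R : RelStr M) : Prop :=
  ∀ T : Set (Form × (ℕ → M)), T.Countable →
    (∀ s : Finset (Form × (ℕ → M)), ↑s ⊆ T → ∃ y, ∀ p ∈ s, Sat R p.1 (scons y p.2)) →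
    ∃ y, ∀ p ∈ T, Sat R p.1 (scons y p.2)

theorem countablySaturated_ultrapower [Nonempty M] :
    CountablySaturated (ultrapower (hyperfilter ℕ) R) := by
  classical
  intro T hT h
  rcases T.eq_empty_or_nonempty with rfl | hne
  · simp only [Set.mem_empty_iff_false, false_imp_iff, implies_true, exists_const]
  obtain ⟨t, rfl⟩ := hT.exists_eq_range hne
  simp only [sat_ultrapower, scons_apply_index] at h ⊢
  obtain ⟨y, hy⟩ := exists_forall_eventually_hyperfilter
    (fun m i a => Sat R (t m).1 (scons a fun k => (t m).2 k i)) fun n => by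
      obtain ⟨y, hy⟩ := h ((Finset.range n).image t) (by simp)
      exact ⟨y, fun m hm => hy _ (Finset.mem_image_of_mem t (Finset.mem_range.2 hm))⟩
  exact ⟨y, Set.forall_mem_range.2 hy⟩

variable [Encodable α] [Inhabited α]

theorem CountablySaturated.exists_forall_subset_diagram (hR : CountablySaturated R) [Countable κ]
    {w : κ → α → M} {D : κ → Set (Assertion (Unit ⊕ α))}
    (h : ∀ s : Finset (κ × Assertion (Unit ⊕ α)), (∀ q ∈ s, q.2 ∈ D q.1) →
      ∃ y, ∀ q ∈ s, q.2 ∈ diagram R (adjoin y (w q.1))) :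
    ∃ y, ∀ k, D k ⊆ diagram R (adjoin y (w k)) := by
  classical
  let f : κ × Assertion (Unit ⊕ α) → Form × (ℕ → M) := fun q => (openForm q.2, env (w q.1))
  obtain ⟨y, hy⟩ := hR (f '' {q | q.2 ∈ D q.1}) ((Set.to_countable _).image f) fun s hs => by
    obtain ⟨s', hs', rfl⟩ := Finset.subset_set_image_iff.1 hs
    obtain ⟨y, hy⟩ := h s' hs'
    exact ⟨y, Finset.forall_mem_image.2 fun q hq => sat_openForm.2 (hy q hq)⟩
  exact ⟨y, fun k p hp => sat_openForm.1 (hy _ ⟨(k, p), hp, rfl⟩)⟩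

theorem CountablySaturated.exists_diagram_eq (hR : CountablySaturated R) {w : α → M} {w' : α → N}
    (h : diagram R' w' ⊆ diagram R w) (y' : N) :
    ∃ y, diagram R (adjoin y w) = diagram R' (adjoin y' w') := by
  classical
  obtain ⟨y, hy⟩ := hR.exists_forall_subset_diagram (w := fun _ : Unit => w)
    (D := fun _ => diagram R' (adjoin y' w')) fun s hs => by
      obtain ⟨y, hy⟩ := exists_subset_diagram_adjoin h (y' := y') (s.image Prod.snd) (by
        rintro p hp
        obtain ⟨q, hq, rfl⟩ := Finset.mem_image.1 hp
        exact hs q hq)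
      exact ⟨y, fun q hq => hy (Finset.mem_image_of_mem _ hq)⟩
  exact ⟨y, (diagram_eq_of_subset (hy ())).symm⟩

end Saturation

section Extension

variable {M α β : Type*} {R : RelStr M} {S : Set (Set ℕ)}

theorem chi_turingJoin_two_mul {X Y : Set ℕ} {n : ℕ} : chi (turingJoin X Y) (2 * n) = chi X n := by
  rw [Bool.eq_iff_iff, chi_eq_true, chi_eq_true, even_mem_turingJoin]

theorem chi_turingJoin_two_mul_add_one {X Y : Set ℕ} {n : ℕ} :
    chi (turingJoin X Y) (2 * n + 1) = chi Y n := by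
  rw [Bool.eq_iff_iff, chi_eq_true, chi_eq_true, odd_mem_turingJoin]

variable [Primcodable α]

/-- The requirement that the assertion with code `n`, if it holds, be preserved by renaming the
elements along `f`; the bit `b` says whether it holds. -/
def transferFacts (f : α → β) (n : ℕ) (b : Bool) : List (Assertion β) :=
  bif b then ((decode n).map fun p => [Assertion.map f p]).getD [] else []

theorem primrec_transferFacts [Primcodable β] {f : α → β} (hf : Primrec f) :
    Primrec₂ (transferFacts f) :=
  Primrec.cond Primrec.snd
    (Primrec.option_getD.comp (Primrec.option_map (Primrec.decode.comp Primrec.fst)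
      (Primrec.list_cons.comp ((Assertion.primrec_map hf).comp Primrec.snd)
        (Primrec.const [])).to₂) (Primrec.const []))
    (Primrec.const [])

theorem mem_transferFacts {f : α → β} {n : ℕ} {D : Set (Assertion α)} {p : Assertion β} :
    p ∈ transferFacts f n (chi (codeSet D) n) ↔
      ∃ q ∈ D, decode n = some q ∧ Assertion.map f q = p := by
  by_cases hn : n ∈ codeSet D
  · have hchi := chi_eq_true.2 hn
    obtain ⟨q, hq, hdec⟩ := hn
    rw [transferFacts, hchi, cond_true, hdec, Option.map_some,
      Option.getD_some, List.mem_singleton]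
    exact ⟨fun h => ⟨q, hq, rfl, h.symm⟩, fun ⟨_, _, h, hp⟩ => Option.some.inj h ▸ hp.symm⟩
  · rw [transferFacts, Bool.eq_false_iff.2 (mt chi_eq_true.1 hn), cond_false, List.mem_nil_iff,
      false_iff]
    exact fun ⟨q, hq, hdec, _⟩ => hn ⟨q, hq, hdec⟩

theorem transferFacts_subset_diagram {N : Type*} {Q : RelStr N} [Inhabited α] [Inhabited β]
    {f : α → β} (hf : f default = default) {D : Set (Assertion α)} {u : β → N} :
    (∀ n, ∀ p ∈ transferFacts f n (chi (codeSet D) n), p ∈ diagram Q u) ↔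
      D ⊆ diagram Q (u ∘ f) := by
  rw [← preimage_map_diagram hf]
  constructor
  · exact fun h q hq => h (encode q) _ (mem_transferFacts.2 ⟨q, hq, encodek q, rfl⟩)
  · intro h n p hp
    obtain ⟨q, hq, -, rfl⟩ := mem_transferFacts.1 hp
    exact h hq

/-- The requirements `F` on `adjoin y w`, interleaved with the requirement to preserve the
diagram of `w`. -/
def extendFacts (F : ℕ → Bool → List (Assertion (Unit ⊕ α))) (n : ℕ) :
    Bool → List (Assertion (Unit ⊕ α)) :=
  if n % 2 = 0 then F (n / 2) else transferFacts Sum.inr (n / 2)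

theorem primrec_extendFacts {F : ℕ → Bool → List (Assertion (Unit ⊕ α))} (hF : Primrec₂ F) :
    Primrec₂ (extendFacts F) := by
  have half : Primrec fun x : ℕ × Bool => x.1 / 2 :=
    Primrec.nat_div.comp Primrec.fst (Primrec.const 2)
  refine (Primrec.ite (Primrec.eq.comp (Primrec.nat_mod.comp Primrec.fst (Primrec.const 2))
    (Primrec.const 0)) (hF.comp half Primrec.snd)
    ((primrec_transferFacts Primrec.sumInr).comp half Primrec.snd)).of_eq fun x => ?_
  rw [extendFacts, ite_apply]

theorem extendFacts_two_mul (F : ℕ → Bool → List (Assertion (Unit ⊕ α))) (n : ℕ) :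
    extendFacts F (2 * n) = F n := by
  simp [extendFacts]

theorem extendFacts_two_mul_add_one (F : ℕ → Bool → List (Assertion (Unit ⊕ α))) (n : ℕ) :
    extendFacts F (2 * n + 1) = transferFacts Sum.inr n := by
  rw [extendFacts, if_neg (by omega), show (2 * n + 1) / 2 = n by omega]

theorem extendFacts_turingJoin_subset {N : Type*} {Q : RelStr N} [Inhabited α] {Z : Set ℕ}
    {D : Set (Assertion α)} {F : ℕ → Bool → List (Assertion (Unit ⊕ α))} {u : Unit ⊕ α → N} :
    (∀ n, ∀ p ∈ extendFacts F n (chi (turingJoin Z (codeSet D)) n), p ∈ diagram Q u) ↔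
      (∀ n, ∀ p ∈ F n (chi Z n), p ∈ diagram Q u) ∧ D ⊆ diagram Q (u ∘ Sum.inr) := by
  rw [← transferFacts_subset_diagram (f := (Sum.inr : α → Unit ⊕ α)) rfl]
  constructor
  · refine fun h => ⟨fun n => ?_, fun n => ?_⟩
    · simpa only [extendFacts_two_mul, chi_turingJoin_two_mul] using h (2 * n)
    · simpa only [extendFacts_two_mul_add_one, chi_turingJoin_two_mul_add_one] using h (2 * n + 1)
  · rintro ⟨hF, hD⟩ n
    obtain ⟨m, rfl | rfl⟩ := n.even_or_odd'
    · simpa only [extendFacts_two_mul, chi_turingJoin_two_mul] using hF m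
    · simpa only [extendFacts_two_mul_add_one, chi_turingJoin_two_mul_add_one] using hD m

theorem ScottSet.extend [Inhabited α] (hS : ScottSet S) (hL : LeastCounterexample R)
    (hR : CountablySaturated R) {w : α → M} (hw : codeSet (diagram R w) ∈ S) {Z : Set ℕ}
    (hZ : Z ∈ S) {F : ℕ → Bool → List (Assertion (Unit ⊕ α))} (hF : Primrec₂ F)
    (h : ∀ N, ∃ y, ∀ n < N, ∀ p ∈ F n (chi Z n), p ∈ diagram R (adjoin y w)) :
    ∃ y, codeSet (diagram R (adjoin y w)) ∈ S ∧
      ∀ n, ∀ p ∈ F n (chi Z n), p ∈ diagram R (adjoin y w) := by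
  obtain ⟨R', u, -, huS, hu⟩ := hS.exists_diagram (hS.2.1.1 Z hZ _ hw)
    (primrec_extendFacts hF) fun N => by
      obtain ⟨y, hy⟩ := h N
      refine ⟨M, R, adjoin y w, hL, fun n hn p hp => ?_⟩
      obtain ⟨m, rfl | rfl⟩ := n.even_or_odd'
      · rw [extendFacts_two_mul, chi_turingJoin_two_mul] at hp
        exact hy m (by omega) p hp
      · rw [extendFacts_two_mul_add_one, chi_turingJoin_two_mul_add_one] at hp
        exact (transferFacts_subset_diagram (f := (Sum.inr : α → Unit ⊕ α)) rfl).2 subset_rfl m p hp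
  obtain ⟨hFu, hwu⟩ := extendFacts_turingJoin_subset.1 hu
  obtain ⟨y, hy⟩ := hR.exists_diagram_eq (diagram_eq_of_subset hwu).superset (u (.inl ()))
  rw [adjoin_eta] at hy
  exact ⟨y, hy ▸ huS, hy ▸ hFu⟩

end Extension

section Amalgamation

variable {M α β : Type*} {R : RelStr M} {S : Set (Set ℕ)}

theorem adjoin_comp_map (y : M) (v : β → M) (f : α → β) :
    adjoin y v ∘ Sum.map id f = adjoin y (v ∘ f) :=
  Sum.elim_comp_map

theorem primrec_sumMap_id [Primcodable α] [Primcodable β] {f : α → β} (hf : Primrec f) :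
    Primrec (Sum.map (id : Unit → Unit) f) :=
  (Primrec.sumCasesOn Primrec.id (Primrec.sumInl.comp Primrec.snd).to₂
    (Primrec.sumInr.comp (hf.comp Primrec.snd)).to₂).of_eq fun x => by rcases x with _ | _ <;> rfl

variable [Inhabited α] [Inhabited β]

theorem diagram_adjoin_comp_congr {y y' : M} {v : β → M} {f : α → β} (hf : f default = default)
    (h : diagram R (adjoin y v) = diagram R (adjoin y' v)) :
    diagram R (adjoin y (v ∘ f)) = diagram R (adjoin y' (v ∘ f)) := by
  have hmap : Sum.map (id : Unit → Unit) f default = default := congrArg Sum.inr hf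
  rw [← adjoin_comp_map, ← adjoin_comp_map, ← preimage_map_diagram hmap, h,
    preimage_map_diagram hmap]

variable [Primcodable α] [Primcodable β]

theorem ScottSet.exists_adjoin_comp_eq (hS : ScottSet S) (hL : LeastCounterexample R)
    (hR : CountablySaturated R) {v : β → M} (hv : codeSet (diagram R v) ∈ S) {f : α → β}
    (hf : Primrec f) (hf₀ : f default = default) {y : M}
    (hy : codeSet (diagram R (adjoin y (v ∘ f))) ∈ S) :
    ∃ y', codeSet (diagram R (adjoin y' v)) ∈ S ∧
      diagram R (adjoin y' (v ∘ f)) = diagram R (adjoin y (v ∘ f)) := by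
  have hmap : Sum.map (id : Unit → Unit) f default = default := congrArg Sum.inr hf₀
  obtain ⟨y', hy', h⟩ := hS.extend hL hR hv hy (primrec_transferFacts (primrec_sumMap_id hf))
    fun N => ⟨y, fun n _ => (transferFacts_subset_diagram hmap).2
      (by rw [adjoin_comp_map]) n⟩
  rw [transferFacts_subset_diagram hmap, adjoin_comp_map] at h
  exact ⟨y', hy', (diagram_eq_of_subset h).symm⟩

theorem ScottSet.exists_adjoin_limit (hS : ScottSet S) (hL : LeastCounterexample R)
    (hR : CountablySaturated R) {w : ℕ → α → M} (hwS : ∀ k, codeSet (diagram R (w k)) ∈ S)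
    {f : ℕ → α → α} (hf : ∀ k, Primrec (f k)) (hf₀ : ∀ k, f k default = default)
    (hw : ∀ k m, k ≤ m → w m ∘ f k = w k) {y₀ : M}
    (hy₀ : codeSet (diagram R (adjoin y₀ (w 0))) ∈ S) :
    ∃ z, (∀ k, codeSet (diagram R (adjoin z (w k))) ∈ S) ∧
      diagram R (adjoin z (w 0)) = diagram R (adjoin y₀ (w 0)) := by
  have step (k : ℕ) (y : M) (hy : codeSet (diagram R (adjoin y (w k))) ∈ S) :
      ∃ y', codeSet (diagram R (adjoin y' (w (k + 1)))) ∈ S ∧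
        diagram R (adjoin y' (w k)) = diagram R (adjoin y (w k)) := by
    rw [← hw k (k + 1) k.le_succ] at hy ⊢
    exact hS.exists_adjoin_comp_eq hL hR (hwS _) (hf k) (hf₀ k) hy
  choose! next hnext hnext_eq using step
  let y : ℕ → M := Nat.rec y₀ next
  have hyS (k : ℕ) : codeSet (diagram R (adjoin (y k) (w k))) ∈ S := by
    induction k with
    | zero => exact hy₀
    | succ k ih => exact hnext k (y k) ih
  have hy_eq (k m : ℕ) (hkm : k ≤ m) :
      diagram R (adjoin (y m) (w k)) = diagram R (adjoin (y k) (w k)) := by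
    induction m, hkm using Nat.le_induction with
    | base => rfl
    | succ m hkm ih =>
      rw [← ih, ← hw k m hkm]
      exact diagram_adjoin_comp_congr (hf₀ k) (hnext_eq m (y m) (hyS m))
  obtain ⟨z, hz⟩ := hR.exists_forall_subset_diagram (w := w)
    (D := fun k => diagram R (adjoin (y k) (w k))) fun s hs =>
      ⟨y (s.sup Prod.fst), fun q hq => by
        rw [hy_eq q.1 _ (Finset.le_sup (f := Prod.fst) hq)]
        exact hs q hq⟩
  have hz_eq (k : ℕ) := diagram_eq_of_subset (hz k)
  exact ⟨z, fun k => hz_eq k ▸ hyS k, (hz_eq 0).symm⟩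

end Amalgamation

section Good

variable {M ι : Type*} {R : RelStr M} {S : Set (Set ℕ)} {num : ℕ → M} {B : Set M}

/-- The environment listing the entries of `l`, and `num 0` from there on. -/
def listEnv (num : ℕ → M) (l : List M) (j : ℕ) : M := l.getD j (num 0)

/-- The entries of `l`, named by `.inl`, together with the numerals, named by `.inr`. -/
def tupleVal (num : ℕ → M) (l : List M) : ℕ ⊕ ℕ → M := Sum.elim (listEnv num l) num

/-- The renaming that forgets all but the first `n` entries of a tuple. -/
def restrict (n : ℕ) : ℕ ⊕ ℕ → ℕ ⊕ ℕ := Sum.elim (fun j => if j < n then .inl j else .inr 0) .inr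

theorem primrec_restrict (n : ℕ) : Primrec (restrict n) :=
  (Primrec.sumCasesOn Primrec.id
    (Primrec.ite (Primrec.nat_lt.comp Primrec.snd (Primrec.const n))
      (Primrec.sumInl.comp Primrec.snd) (Primrec.const (.inr 0))).to₂
    (Primrec.sumInr.comp Primrec.snd).to₂).of_eq fun x => by rcases x with _ | _ <;> rfl

theorem tupleVal_append_comp_restrict (l l' : List M) :
    tupleVal num (l ++ l') ∘ restrict l.length = tupleVal num l := by
  funext x
  rcases x with j | n
  · by_cases hj : j < l.length
    · simp [tupleVal, restrict, listEnv, hj, List.getElem?_append_left]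
    · simp [tupleVal, restrict, listEnv, hj]
  · rfl

/-- Every finite tuple of elements of `B` has its diagram over the numerals in `S`. -/
def Good (S : Set (Set ℕ)) (R : RelStr M) (num : ℕ → M) (B : Set M) : Prop :=
  ∀ l : List M, (∀ x ∈ l, x ∈ B) → codeSet (diagram R (tupleVal num l)) ∈ S

theorem ScottSet.codeSet_diagram_tupleVal_mem (hS : ScottSet S) [Primcodable ι] [Inhabited ι]
    {u : ι → M} (hu : codeSet (diagram R u) ∈ S) {ν : ℕ → ι} (hν : Primrec ν)
    (hν₀ : ν 0 = default) {l : List M} (hl : ∀ x ∈ l, x ∈ Set.range u) :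
    codeSet (diagram R (tupleVal (u ∘ ν) l)) ∈ S := by
  obtain ⟨r, rfl⟩ : l ∈ Set.range (List.map u) := by rwa [Set.range_list_map]
  let f : ℕ ⊕ ℕ → ι := Sum.elim (fun j => r.getD j (ν 0)) ν
  have hf : Primrec f :=
    (Primrec.sumCasesOn Primrec.id
      ((Primrec.list_getD (ν 0)).comp (Primrec.const r) Primrec.snd).to₂
      (hν.comp Primrec.snd).to₂).of_eq fun x => by rcases x with _ | _ <;> rfl
  have huf : tupleVal (u ∘ ν) (r.map u) = u ∘ f := by
    funext x
    rcases x with j | n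
    · exact List.getD_map r (ν 0) u
    · rfl
  exact huf ▸ hS.codeSet_diagram_comp_mem hu hf hν₀

theorem ScottSet.good_range (hS : ScottSet S) (h : codeSet (diagram R num) ∈ S) :
    Good S R num (Set.range num) := fun _ hl =>
  hS.codeSet_diagram_tupleVal_mem h Primrec.id rfl hl

theorem Good.insert_of_forall_mem (hS : ScottSet S) {b : ℕ → M} {t : List M} {z : M}
    (hz : ∀ k, codeSet (diagram R (adjoin z (tupleVal num (t ++ (List.range k).map b)))) ∈ S) :
    Good S R num (insert z (Set.range b)) := by
  intro l hl
  have hmem (x) (hx : x ∈ l) : ∀ᶠ k in Filter.atTop,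
      x ∈ Set.range (adjoin z (tupleVal num (t ++ (List.range k).map b))) := by
    rcases hl x hx with rfl | ⟨i, rfl⟩
    · exact .of_forall fun k => ⟨.inl (), rfl⟩
    · filter_upwards [Filter.eventually_gt_atTop i] with k hk
      exact ⟨.inr (.inl (t.length + i)), by simp [adjoin, tupleVal, listEnv, hk]⟩
  obtain ⟨k, hk⟩ := ((Filter.eventually_all_finite l.finite_toSet).2 hmem).exists
  exact hS.codeSet_diagram_tupleVal_mem (hz k) (Primrec.sumInr.comp Primrec.sumInr) rfl hk

theorem Good.extend (hS : ScottSet S) (hL : LeastCounterexample R) (hR : CountablySaturated R)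
    (hB : Good S R num B) (hc : B.Countable) (hne : B.Nonempty) {t : List M}
    (ht : ∀ x ∈ t, x ∈ B) {Z : Set ℕ} (hZ : Z ∈ S)
    {F : ℕ → Bool → List (Assertion (Unit ⊕ ℕ ⊕ ℕ))} (hF : Primrec₂ F)
    (h : ∀ N, ∃ y, ∀ n < N, ∀ p ∈ F n (chi Z n), p ∈ diagram R (adjoin y (tupleVal num t))) :
    ∃ y, Good S R num (insert y B) ∧
      ∀ n, ∀ p ∈ F n (chi Z n), p ∈ diagram R (adjoin y (tupleVal num t)) := by
  obtain ⟨b, rfl⟩ := hc.exists_eq_range hne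
  let w (k : ℕ) : ℕ ⊕ ℕ → M := tupleVal num (t ++ (List.range k).map b)
  have hw₀ : w 0 = tupleVal num t := congrArg (tupleVal num) (List.append_nil t)
  have hw (k m : ℕ) (hkm : k ≤ m) : w m ∘ restrict (t.length + k) = w k := by
    obtain ⟨d, rfl⟩ := Nat.exists_eq_add_of_le hkm
    have := tupleVal_append_comp_restrict (num := num) (t ++ (List.range k).map b)
      ((List.range d).map fun i => b (k + i))
    simpa [w, List.range_add, Function.comp_def] using this
  have hwS (k : ℕ) : codeSet (diagram R (w k)) ∈ S :=
    hB _ (List.forall_mem_append.2 ⟨ht, List.forall_mem_map.2 fun i _ => ⟨i, rfl⟩⟩)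
  rw [← hw₀] at h ⊢
  obtain ⟨y₀, hy₀, hF₀⟩ := hS.extend hL hR (hwS 0) hZ hF h
  obtain ⟨z, hz, hz₀⟩ := hS.exists_adjoin_limit hL hR hwS
    (fun k => primrec_restrict (t.length + k)) (fun _ => rfl) hw hy₀
  exact ⟨z, .insert_of_forall_mem hS hz, hz₀ ▸ hF₀⟩

end Good

section Requirements

variable {M : Type*} {R : RelStr M} {S : Set (Set ℕ)} {num : ℕ → M} {B : Set M}

theorem exists_testBit_eq (f : ℕ → Bool) (N : ℕ) : ∃ a, N ≤ a ∧ ∀ j < N, a.testBit j = f j := by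
  let g : Fin (N + 1) → Bool := fun i => i.1 == N || f i
  refine ⟨Nat.ofBits g, ?_, fun j hj => ?_⟩
  · have : (Nat.ofBits g).testBit N = true := by
      rw [Nat.testBit_ofBits_lt _ _ N.lt_succ_self]
      simp [g]
    exact Nat.lt_two_pow_self.le.trans (Nat.ge_two_pow_of_testBit this)
  · rw [Nat.testBit_ofBits_lt _ _ (hj.trans N.lt_succ_self)]
    simp [g, hj.ne]

/-- `a` is a nonstandard element whose binary digits at standard places are those of `X`. -/
def Codes (R : RelStr M) (num : ℕ → M) (X : Set ℕ) (a : M) : Prop :=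
  ∀ j, CodesBit R num a j (chi X j)

theorem Good.exists_codes (hS : ScottSet S) (hL : LeastCounterexample R)
    (hR : CountablySaturated R) (hN : IsNum R num) (hB : Good S R num B) (hc : B.Countable)
    (hne : B.Nonempty) {X : Set ℕ} (hX : X ∈ S) :
    ∃ y, Good S R num (insert y B) ∧ Codes R num X y := by
  obtain ⟨y, hy, hyX⟩ := hB.extend hS hL hR hc hne (t := []) (by simp) hX
    (F := codeFacts (.inl ()) fun j => .inr (.inr j))
    (primrec_codeFacts (Primrec.const _)
      (Primrec.sumInr.comp Primrec.sumInr) Primrec.fst Primrec.snd) fun N => by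
      obtain ⟨a, hNa, ha⟩ := exists_testBit_eq (chi X) N
      refine ⟨num a, fun j hj => codeFacts_subset_diagram.2 ?_⟩
      rw [← ha j hj]
      exact hN.codesBit a j (hj.trans_le hNa)
  exact ⟨y, hy, fun j => codeFacts_subset_diagram.1 (hyX j)⟩

/-- The assertion that `φ` fails with variable `0` standing for a new element and the other
variables for the entries of a tuple. -/
def negAssertion (φ : Form) : Assertion (Unit ⊕ ℕ ⊕ ℕ) :=
  (φ.neg, .inl () :: (List.range φ.bound).map fun j => .inr (.inl j))

theorem negAssertion_mem_diagram {φ : Form} {y : M} {l : List M} :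
    negAssertion φ ∈ diagram R (adjoin y (tupleVal num l)) ↔
      ¬ Sat R φ (scons y (listEnv num l)) := by
  rw [mem_diagram, negAssertion, sat_neg, not_iff_not, look_cons]
  refine sat_congr_of_lt_bound fun i hi => ?_
  cases i with
  | zero => rfl
  | succ j => simp [look, adjoin, tupleVal, Nat.lt_of_succ_lt hi]

theorem Good.exists_counterexample (hS : ScottSet S) (hL : LeastCounterexample R)
    (hR : CountablySaturated R) (hB : Good S R num B) (hc : B.Countable) (hne : B.Nonempty)
    {φ : Form} {l : List M} (hl : ∀ x ∈ l, x ∈ B)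
    (hφ : ∃ x, ¬ Sat R φ (scons x (listEnv num l))) :
    ∃ y, Good S R num (insert y B) ∧ ¬ Sat R φ (scons y (listEnv num l)) := by
  obtain ⟨x, hx⟩ := hφ
  obtain ⟨Z, hZ⟩ := hS.1
  obtain ⟨y, hy, hyφ⟩ := hB.extend hS hL hR hc hne hl hZ
    (F := fun _ _ => [negAssertion φ]) (Primrec.const _) fun _ =>
      ⟨x, fun _ _ => List.forall_mem_singleton.2 (negAssertion_mem_diagram.2 hx)⟩
  exact ⟨y, hy, negAssertion_mem_diagram.1 (List.forall_mem_singleton.1 (hyφ 0))⟩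

theorem codeSet_nat (X : Set ℕ) : codeSet X = X := by
  ext n
  simp [codeSet]

theorem Good.setOf_dig_mem (hS : ScottSet S) (hB : Good S R num B) {a : M} (ha : a ∈ B) :
    {j | Dig R a (num (2 ^ j)) (num (2 ^ (j + 1)))} ∈ S := by
  let f (j : ℕ) : Assertion (ℕ ⊕ ℕ) := (.digit, [.inl 0, .inr (2 ^ j), .inr (2 ^ (j + 1))])
  have hf : Primrec f :=
    Primrec.pair (Primrec.const _) <| primrec_list_triple (Primrec.const _)
      (Primrec.sumInr.comp primrec_two_pow)
      (Primrec.sumInr.comp (primrec_two_pow.comp Primrec.succ))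
  have := hS.codeSet_preimage_codeSet_mem (hB [a] (by simpa)) hf
  rw [codeSet_nat] at this
  convert this using 1
  ext j
  simp [f, look, tupleVal, listEnv]

end Requirements

section Closure

open Cardinal Filter Set

variable {I M T W : Type}

theorem mk_prod_list_sum_le {B : Set M} (hT : #T ≤ ℵ₁) (hB : B.Countable) (hI : #I = ℵ₁) :
    #(T × List (B ⊕ I)) ≤ ℵ₁ := by
  have hsum : #(B ⊕ I) = ℵ₁ := by
    rw [mk_sum, lift_id, lift_id, hI]
    exact add_eq_right (aleph0_le_aleph 1) (hB.le_aleph0.trans (aleph0_le_aleph 1))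
  have : Infinite (B ⊕ I) := infinite_iff.2 (hsum ▸ aleph0_le_aleph 1)
  rw [mk_prod, lift_id, lift_id, mk_list_eq_mk, hsum]
  exact (mul_le_mul' hT le_rfl).trans (mul_eq_self (aleph0_le_aleph 1)).le

variable [LinearOrder I]

theorem exists_forall_frequently_eq [Nonempty W] (hW : #W ≤ ℵ₁) (hI : #I = ℵ₁)
    (hIio : ∀ i : I, (Iio i).Countable) : ∃ τ : I → W, ∀ w, ∃ᶠ i in atTop, τ i = w := by
  have hle : #(W × I) ≤ #I := by
    rw [mk_prod, lift_id, lift_id, hI]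
    exact (mul_le_mul' hW le_rfl).trans (mul_eq_self (aleph0_le_aleph 1)).le
  have : Nonempty I := mk_ne_zero_iff.1 (hI ▸ (aleph_pos 1).ne')
  obtain ⟨e⟩ := hle
  obtain ⟨σ, hσ⟩ := e.injective.hasLeftInverse
  refine ⟨fun i => (σ i).1, fun w => frequently_atTop.2 fun a => by_contra fun hcon => ?_⟩
  have hsub : range (fun j => e (w, j)) ⊆ Iio a := by
    rintro _ ⟨j, rfl⟩
    exact lt_of_not_ge fun h => hcon ⟨_, h, congrArg Prod.fst (hσ (w, j))⟩
  have hinj : Function.Injective fun j => e (w, j) :=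
    e.injective.comp (Prod.mk_right_injective w)
  have : #I ≤ ℵ₀ := (mk_range_eq _ hinj).symm.trans_le (((hIio a).mono hsub).le_aleph0)
  exact (lt_aleph_one_iff.2 this).ne hI

theorem exists_forall_eq_of_lt [WellFoundedLT I] (G : I → (I → M) → M) (m : M) :
    ∃ f : I → M, ∀ i, f i = G i fun j => if j < i then f j else m :=
  ⟨WellFounded.fix wellFounded_lt fun i prev => G i fun j => if h : j < i then prev j h else m,
    fun i => by rw [WellFounded.fix_eq]; rfl⟩

theorem union_image_mem_of_forall_Iic {𝓕 : Set (Set M)} (h𝓕 : Order.IsOfFiniteCharacter 𝓕)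
    {B : Set M} (hB : B ∈ 𝓕) {f : I → M} {J : Set I} (h : ∀ j ∈ J, B ∪ f '' Iic j ∈ 𝓕) :
    B ∪ f '' J ∈ 𝓕 := by
  refine (h𝓕 _).2 fun A hA hfin => ?_
  obtain ⟨s, hsJ, hsfin, hs⟩ :=
    (hfin.sdiff (t := B)).exists_subset_finite_image_eq (sdiff_subset_iff.2 hA)
  rcases s.eq_empty_or_nonempty with rfl | hne
  · exact (h𝓕 B).1 hB A (sdiff_eq_empty.1 (by rw [← hs, image_empty])) hfin
  · obtain ⟨j, hj, hmax⟩ := exists_max_image s id hsfin hne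
    exact (h𝓕 _).1 (h j (hsJ hj)) A (sdiff_subset_iff.1 (hs ▸ image_mono hmax)) hfin

theorem union_image_mem_of_forall_insert [WellFoundedLT I] {𝓕 : Set (Set M)}
    (h𝓕 : Order.IsOfFiniteCharacter 𝓕) {B : Set M} (hB : B ∈ 𝓕) {f : I → M}
    (h : ∀ i, B ∪ f '' Iio i ∈ 𝓕 → insert (f i) (B ∪ f '' Iio i) ∈ 𝓕) (J : Set I) :
    B ∪ f '' J ∈ 𝓕 := by
  have hIic (i : I) : B ∪ f '' Iic i ∈ 𝓕 := by
    induction i using WellFoundedLT.induction with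
    | ind i ih =>
      rw [← Iio_insert, image_insert_eq, union_insert]
      exact h i (union_image_mem_of_forall_Iic h𝓕 hB ih)
  exact union_image_mem_of_forall_Iic h𝓕 hB fun j _ => hIic j

theorem exists_eventually_map_eq [NoMaxOrder I] {B : Set M} {f : I → M} {l : List M}
    (hl : ∀ x ∈ l, x ∈ B ∪ range f) (m : M) :
    ∃ r : List (B ⊕ I), ∀ᶠ i in atTop,
      r.map (Sum.elim Subtype.val fun j => if j < i then f j else m) = l := by
  obtain ⟨r, rfl⟩ : l ∈ range (List.map (Sum.elim ((↑) : B → M) f)) := by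
    rwa [range_list_map, Sum.elim_range, Subtype.range_coe]
  refine ⟨r, ((eventually_all_finite r.finite_toSet).2 fun q _ => ?_).mono fun i hi =>
    List.map_congr_left hi⟩
  rcases q with b | j
  · exact .of_forall fun i => rfl
  · exact (eventually_gt_atTop j).mono fun i hi => if_pos hi

theorem countable_Iio_of_ord_aleph_one (i : (ℵ₁ : Cardinal.{0}).ord.ToType) :
    (Iio i).Countable := by
  rw [← le_aleph0_iff_set_countable, ← lt_aleph_one_iff]
  exact (mk_Iio_lt i (by rw [mk_ord_toType, Ordinal.type_toType])).trans_eq (mk_ord_toType ℵ₁)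

theorem exists_superset_forall_meets [Nonempty T] (hT : #T ≤ ℵ₁) {𝓕 : Set (Set M)}
    (h𝓕 : Order.IsOfFiniteCharacter 𝓕) {Meets : T → List M → M → Prop} {B₀ : Set M}
    (hc : B₀.Countable) (hne : B₀.Nonempty) (hB₀ : B₀ ∈ 𝓕)
    (hstep : ∀ B ⊇ B₀, B.Countable → B ∈ 𝓕 → ∀ t l, (∀ x ∈ l, x ∈ B) →
      ∃ y, insert y B ∈ 𝓕 ∧ Meets t l y) :
    ∃ B ⊇ B₀, B ∈ 𝓕 ∧ ∀ t l, (∀ x ∈ l, x ∈ B) → ∃ y ∈ B, Meets t l y := by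
  let I := (ℵ₁ : Cardinal.{0}).ord.ToType
  have hI : #I = ℵ₁ := mk_ord_toType _
  have : NoMaxOrder I := noMaxOrder (aleph0_le_aleph 1)
  have : Nonempty I := mk_ne_zero_iff.1 (hI ▸ (aleph_pos 1).ne')
  have hIio (i : I) : (Iio i).Countable := countable_Iio_of_ord_aleph_one i
  obtain ⟨m, hm⟩ := hne
  obtain ⟨τ, hτ⟩ := exists_forall_frequently_eq (mk_prod_list_sum_le hT hc hI) hI hIio
  have : Nonempty M := ⟨m⟩
  choose! next hnext using hstep
  let params (i : I) (f : I → M) : List M := (τ i).2.map (Sum.elim Subtype.val f)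
  obtain ⟨f, hf⟩ := exists_forall_eq_of_lt
    (fun i f => next (B₀ ∪ f '' Iio i) (τ i).1 (params i f)) m
  have hf_next (i : I) (hi : B₀ ∪ f '' Iio i ∈ 𝓕) : insert (f i) (B₀ ∪ f '' Iio i) ∈ 𝓕 ∧
      Meets (τ i).1 (params i fun j => if j < i then f j else m) (f i) := by
    have himage : (fun j => if j < i then f j else m) '' Iio i = f '' Iio i :=
      image_congr fun j hj => if_pos hj
    rw [hf i, himage]
    refine hnext _ subset_union_left (hc.union ((hIio i).image f)) hi _ _
      (List.forall_mem_map.2 ?_)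
    rintro (b | j) -
    · exact .inl b.2
    · by_cases hj : j < i
      · exact .inr ⟨j, hj, (if_pos hj).symm⟩
      · exact .inl (by rwa [Sum.elim_inr, if_neg hj])
  have hmem := union_image_mem_of_forall_insert h𝓕 hB₀ fun i hi => (hf_next i hi).1
  refine ⟨B₀ ∪ range f, subset_union_left, image_univ (f := f) ▸ hmem univ, fun t l hl => ?_⟩
  obtain ⟨r, hr⟩ := exists_eventually_map_eq hl m
  obtain ⟨i, hi, hri⟩ := ((hτ (t, r)).and_eventually hr).exists
  have := (hf_next i (hmem _)).2
  simp only [params, hi, hri] at this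
  exact ⟨f i, .inr ⟨i, rfl⟩, this⟩

end Closure

section Construction

variable {M : Type} {R : RelStr M} {S : Set (Set ℕ)} {num : ℕ → M}

theorem isOfFiniteCharacter_good : Order.IsOfFiniteCharacter {B | Good S R num B} := fun _ =>
  ⟨fun h _ hA _ l hl => h l fun x hx => hA (hl x hx),
    fun h l hl => h {x | x ∈ l} hl l.finite_toSet l fun _ hx => hx⟩

/-- The Tarski–Vaught criterion for `B` to be the universe of an elementary substructure. -/
def TarskiVaught {M : Type*} (R : RelStr M) (B : Set M) : Prop :=
  ∀ (φ : Form) (v : ℕ → M), (∀ i, v i ∈ B) → (∃ x, ¬ Sat R φ (scons x v)) →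
    ∃ x ∈ B, ¬ Sat R φ (scons x v)

theorem tarskiVaught_of_forall_list {B : Set M}
    (h : ∀ φ (l : List M), (∀ x ∈ l, x ∈ B) → (∃ x, ¬ Sat R φ (scons x (listEnv num l))) →
      ∃ x ∈ B, ¬ Sat R φ (scons x (listEnv num l))) : TarskiVaught R B := by
  intro φ v hv
  have hl (x) : Sat R φ (scons x (listEnv num ((List.range φ.bound).map v))) ↔
      Sat R φ (scons x v) := sat_congr_of_lt_bound fun i hi => by
    cases i with
    | zero => rfl
    | succ i => simp [listEnv, Nat.lt_of_succ_lt hi]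
  simpa only [hl] using h φ ((List.range φ.bound).map v) (List.forall_mem_map.2 fun i _ => hv i)

theorem ScottSet.exists_good_superset (hS : ScottSet S) (hcard : Cardinal.mk S ≤ Cardinal.aleph 1)
    (hL : LeastCounterexample R) (hR : CountablySaturated R) (hN : IsNum R num)
    (hG : Good S R num (Set.range num)) :
    ∃ B ⊇ Set.range num, Good S R num B ∧ TarskiVaught R B ∧
      ∀ X ∈ S, ∃ a ∈ B, Codes R num X a := by
  let Meets : S ⊕ Form → List M → M → Prop := Sum.elim (fun X _ y => Codes R num X y)
    fun φ l y => (∃ x, ¬ Sat R φ (scons x (listEnv num l))) → ¬ Sat R φ (scons y (listEnv num l))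
  have hT : Cardinal.mk (S ⊕ Form) ≤ Cardinal.aleph 1 := by
    rw [Cardinal.mk_sum, Cardinal.lift_id, Cardinal.lift_id]
    exact Cardinal.add_le_of_le (Cardinal.aleph0_le_aleph 1) hcard
      (Cardinal.mk_le_aleph0.trans (Cardinal.aleph0_le_aleph 1))
  have : Nonempty (S ⊕ Form) := ⟨.inr (.eq 0 0)⟩
  obtain ⟨B, hB, hgood, hmeets⟩ := exists_superset_forall_meets hT isOfFiniteCharacter_good
    (Meets := Meets) (Set.countable_range num) (Set.range_nonempty num) hG
    fun B hB hc hgood t l hl => by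
      have hne : B.Nonempty := (Set.range_nonempty num).mono hB
      rcases t with X | φ
      · exact Good.exists_codes hS hL hR hN hgood hc hne X.2
      · by_cases hφ : ∃ x, ¬ Sat R φ (scons x (listEnv num l))
        · obtain ⟨y, hy, hyφ⟩ := Good.exists_counterexample hS hL hR hgood hc hne hl hφ
          exact ⟨y, hy, fun _ => hyφ⟩
        · refine ⟨num 0, ?_, fun h => absurd h hφ⟩
          rwa [Set.insert_eq_of_mem (hB ⟨0, rfl⟩)]
  refine ⟨B, hB, hgood, tarskiVaught_of_forall_list (num := num) fun φ l hl hφ => ?_,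
    fun X hX => hmeets (.inl ⟨X, hX⟩) [] (by simp)⟩
  obtain ⟨y, hy, hyφ⟩ := hmeets (.inr φ) l hl
  exact ⟨y, hy, hyφ hφ⟩

end Construction

section Ambient

open Filter

theorem diagram_ultrapower_const {I M ι : Type*} [Inhabited ι] {U : Ultrafilter I} {R : RelStr M}
    (u : ι → M) : diagram (ultrapower U R) (fun j _ => u j) = diagram R u := by
  ext p
  simp only [mem_diagram, sat_ultrapower, look, eventually_const]
  rfl

theorem ScottSet.exists_ambient {S : Set (Set ℕ)} (hS : ScottSet S) :
    ∃ (M : Type) (R : RelStr M) (num : ℕ → M), LeastCounterexample R ∧ CountablySaturated R ∧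
      IsArith R ∧ IsNum R num ∧ Good S R num (Set.range num) := by
  obtain ⟨M, R, num, hL, hA, hN, hnum⟩ := hS.exists_base
  have : Nonempty M := ⟨num 0⟩
  rw [← diagram_ultrapower_const (U := hyperfilter ℕ)] at hnum
  obtain ⟨hA', hN'⟩ := numFacts_subset_diagram.1 <|
    diagram_ultrapower_const (U := hyperfilter ℕ) num ▸ numFacts_subset_diagram.2 ⟨hA, hN⟩
  exact ⟨ℕ → M, ultrapower (hyperfilter ℕ) R, fun j _ => num j, hL.ultrapower,
    countablySaturated_ultrapower, hA', hN', hS.good_range hnum⟩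

end Ambient

section ElementaryMaps

variable {M Q : Type*} {R : RelStr M} {g : Q → M}

theorem IsArith.sat_congr (hA : IsArith R) {φ : Form} {v v' : ℕ → M}
    (h : ∀ i, R.Eqv (v i) (v' i)) : Sat R φ v ↔ Sat R φ v' := by
  induction φ generalizing v v' with
  | atom r i j k =>
    exact ⟨hA.congr _ _ _ _ _ _ _ (h i) (h j) (h k), hA.congr _ _ _ _ _ _ _
      (hA.eq_symm _ _ (h i)) (hA.eq_symm _ _ (h j)) (hA.eq_symm _ _ (h k))⟩
  | nand φ ψ ihφ ihψ => rw [sat_nand, sat_nand, ihφ h, ihψ h]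
  | all φ ih =>
    refine forall_congr' fun x => ih fun i => ?_
    cases i with
    | zero => exact hA.eq_refl x
    | succ i => exact h i

/-- The relational structure induced along a map. -/
def RelStr.comap (g : Q → M) (R : RelStr M) : RelStr Q := fun r x y z => R r (g x) (g y) (g z)

/-- The map `g` is an elementary embedding of the structure that it induces. -/
def IsElementary (g : Q → M) (R : RelStr M) : Prop :=
  ∀ (φ : Form) (v : ℕ → Q), Sat (R.comap g) φ v ↔ Sat R φ (g ∘ v)

theorem comp_scons (x : Q) (v : ℕ → Q) : g ∘ scons x v = scons (g x) (g ∘ v) := by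
  funext k; cases k <;> rfl

theorem TarskiVaught.isElementary (hA : IsArith R) {B : Set M} (hB : TarskiVaught R B)
    (hgB : ∀ q, g q ∈ B) (hg : ∀ b ∈ B, ∃ q, R.Eqv (g q) b) : IsElementary g R := by
  intro φ
  induction φ with
  | atom r i j k => exact fun v => .rfl
  | nand φ ψ ihφ ihψ => intro v; rw [sat_nand, sat_nand, ihφ, ihψ]
  | all φ ih =>
    intro v
    simp only [sat_all, ih, comp_scons]
    refine ⟨fun h => by_contra fun hcon => ?_, fun h x => h (g x)⟩
    obtain ⟨b, hbB, hb⟩ := hB φ (g ∘ v) (fun i => hgB _) (not_forall.1 hcon)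
    obtain ⟨q, hq⟩ := hg b hbB
    refine hb ((hA.sat_congr fun i => ?_).1 (h q))
    cases i with
    | zero => exact hq
    | succ i => exact hA.eq_refl _

theorem IsArith.comap (hA : IsArith R) (hg : IsElementary g R) [Nonempty Q] :
    IsArith (R.comap g) := by
  have v : ℕ → Q := fun _ => Classical.arbitrary Q
  exact (sat_arithAxioms (v := v)).1 fun φ hφ => (hg φ v).2 (sat_arithAxioms.2 hA φ hφ)

theorem sat_ex_least {N : Type*} {T : RelStr N} {φ : Form} {v : ℕ → N} :
    Sat T (.ex (φ.neg.and (.all (.imp (φ.rename (scons 0 (· + 2))).neg (.neg (.lt 0 1)))))) v ↔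
      ∃ x, ¬ Sat T φ (scons x v) ∧ ∀ z, ¬ Sat T φ (scons z v) → ¬ T.Lt z x := by
  have hv (x z : N) : scons z (scons x v) ∘ scons 0 (· + 2) = scons z v := comp_scons _ _
  simp [sat_rename, hv]

theorem LeastCounterexample.comap (hL : LeastCounterexample R) (hg : IsElementary g R) :
    LeastCounterexample (R.comap g) := by
  rintro φ v ⟨x, hx⟩
  rw [hg, comp_scons] at hx
  rw [← sat_ex_least, hg, sat_ex_least]
  exact hL φ _ ⟨g x, hx⟩

theorem dig_comap (hg : IsElementary g R) {x y z : Q} :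
    Dig (R.comap g) x y z ↔ Dig R (g x) (g y) (g z) := by
  simpa using hg .digit (scons x (scons y fun _ => z))

theorem IsArith.dig_congr (hA : IsArith R) {x y z x' y' z' : M} (hx : R.Eqv x x')
    (hy : R.Eqv y y') (hz : R.Eqv z z') : Dig R x y z ↔ Dig R x' y' z' := by
  have h : ∀ i, R.Eqv (scons x (scons y fun _ => z) i) (scons x' (scons y' fun _ => z') i) := by
    rintro (_ | _ | _)
    exacts [hx, hy, hz]
  simpa using hA.sat_congr (φ := .digit) h

theorem IsArith.exists_transversal.{u} {M : Type u} {R : RelStr M} (hA : IsArith R) (B : Set M) :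
    ∃ (Q : Type u) (g : Q → M), (∀ q, g q ∈ B) ∧ (∀ b ∈ B, ∃ q, R.Eqv (g q) b) ∧
      ∀ x y, R.Eqv (g x) (g y) → x = y := by
  let s : Setoid B := ⟨fun x y => R.Eqv x y, fun x => hA.eq_refl x, fun h => hA.eq_symm _ _ h,
    fun h h' => hA.eq_trans _ _ _ h h'⟩
  exact ⟨Quotient s, fun q => q.out.1, fun q => q.out.2,
    fun b hb => ⟨Quotient.mk s ⟨b, hb⟩, Quotient.mk_out (s := s) ⟨b, hb⟩⟩,
    fun x y h => Quotient.out_equiv_out.1 h⟩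

end ElementaryMaps

section Expressibility

variable {Q : Type*} {R : RelStr Q}

/-- A predicate on environments is expressible if it is defined by a formula. -/
def IsExpressible (R : RelStr Q) (P : (ℕ → Q) → Prop) : Prop :=
  ∃ φ : Form, ∀ v, Sat R φ v ↔ P v

/-- A function on environments has an expressible graph if some formula defines its value, for
which variable `0` stands. -/
def HasExpressibleGraph (R : RelStr Q) (f : (ℕ → Q) → Q) : Prop :=
  ∃ φ : Form, ∀ v x, Sat R φ (scons x v) ↔ f v = x

theorem HasExpressibleGraph.comp {f : (ℕ → Q) → Q} (hf : HasExpressibleGraph R f) (ρ : ℕ → ℕ) :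
    HasExpressibleGraph R fun v => f (v ∘ ρ) := by
  obtain ⟨φ, hφ⟩ := hf
  refine ⟨φ.rename (scons 0 (Nat.succ ∘ ρ)), fun v x => ?_⟩
  rw [sat_rename, comp_scons]
  exact hφ (v ∘ ρ) x

theorem IsExpressible.imp {P P' : (ℕ → Q) → Prop} (h : IsExpressible R P)
    (h' : IsExpressible R P') : IsExpressible R fun v => P v → P' v := by
  obtain ⟨φ, hφ⟩ := h
  obtain ⟨ψ, hψ⟩ := h'
  exact ⟨φ.imp ψ, fun v => by rw [sat_imp, hφ, hψ]⟩

theorem IsExpressible.all {P : (ℕ → Q) → Prop} (h : IsExpressible R P) :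
    IsExpressible R fun v => ∀ x, P (scons x v) := by
  obtain ⟨φ, hφ⟩ := h
  exact ⟨φ.all, fun v => forall_congr' fun x => hφ _⟩

theorem HasExpressibleGraph.atom {f₀ f₁ f₂ : (ℕ → Q) → Q} (h₀ : HasExpressibleGraph R f₀)
    (h₁ : HasExpressibleGraph R f₁) (h₂ : HasExpressibleGraph R f₂) (r : RelSym) :
    IsExpressible R fun v => R r (f₀ v) (f₁ v) (f₂ v) := by
  obtain ⟨φ₀, hφ₀⟩ := h₀
  obtain ⟨φ₁, hφ₁⟩ := h₁
  obtain ⟨φ₂, hφ₂⟩ := h₂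
  have drop (v : ℕ → Q) (x y z : Q) : scons z (scons y (scons x v)) ∘ (· + 3) = v := rfl
  refine ⟨.ex <| .ex <| .ex <| (φ₀.rename (scons 2 (· + 3))).and <|
    (φ₁.rename (scons 1 (· + 3))).and <| (φ₂.rename (scons 0 (· + 3))).and (.atom r 2 1 0),
    fun v => ?_⟩
  simp [sat_rename, comp_scons, drop, hφ₀, hφ₁, hφ₂]

end Expressibility

section FirstOrderStructures

variable {Q : Type*} {R : RelStr Q}

/-- The structure for the language of arithmetic whose operations have the graphs given by `R`. -/
@[reducible]
noncomputable def IsArith.toStructure (hA : IsArith R) : arith.Structure Q where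
  funMap f v :=
    match f with
    | .zero => hA.zero_total.choose
    | .one => hA.one_total.choose
    | .add => (hA.add_total (v 0) (v 1)).choose
    | .mul => (hA.mul_total (v 0) (v 1)).choose
  RelMap r v :=
    match r with
    | .lt => R.Lt (v 0) (v 1)

/-- The relational structure `R` is the presentation by graphs of the first-order structure `Q`. -/
structure Matches (R : RelStr Q) [arith.Structure Q] : Prop where
  add {x y z} : R .add x y z ↔ addM x y = z
  mul {x y z} : R .mul x y z ↔ mulM x y = z
  lt {x y} : R.Lt x y ↔ ltM x y
  eq {x y} : R.Eqv x y ↔ x = y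
  zero {x} : R.IsZero x ↔ zeroM Q = x
  one {x} : R.IsOne x ↔ oneM Q = x

theorem IsArith.matches_toStructure (hA : IsArith R) (heq : ∀ x y, R.Eqv x y → x = y) :
    letI := hA.toStructure
    Matches R := by
  let _ := hA.toStructure
  have hzero : R.IsZero (zeroM Q) := hA.zero_total.choose_spec
  have hone : R.IsOne (oneM Q) := hA.one_total.choose_spec
  have hadd (x y : Q) : R .add x y (addM x y) := (hA.add_total x y).choose_spec
  have hmul (x y : Q) : R .mul x y (mulM x y) := (hA.mul_total x y).choose_spec
  exact
    { add := ⟨fun h => heq _ _ (hA.add_unique _ _ _ _ (hadd _ _) h), fun h => h ▸ hadd _ _⟩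
      mul := ⟨fun h => heq _ _ (hA.mul_unique _ _ _ _ (hmul _ _) h), fun h => h ▸ hmul _ _⟩
      lt := .rfl
      eq := ⟨heq _ _, fun h => h ▸ hA.eq_refl _⟩
      zero := ⟨fun h => heq _ _ (hA.zero_unique _ _ hzero h), fun h => h ▸ hzero⟩
      one := ⟨fun h => heq _ _ (hA.one_unique _ _ hone h), fun h => h ▸ hone⟩ }

variable [arith.Structure Q]

theorem funMap_zero (v : Fin 0 → Q) :
    Structure.funMap (L := arith) arithFunc.zero v = zeroM Q :=
  congrArg _ (Subsingleton.elim _ _)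

theorem funMap_one (v : Fin 0 → Q) : Structure.funMap (L := arith) arithFunc.one v = oneM Q :=
  congrArg _ (Subsingleton.elim _ _)

theorem funMap_add (v : Fin 2 → Q) :
    Structure.funMap (L := arith) arithFunc.add v = addM (v 0) (v 1) :=
  congrArg _ (FinVec.etaExpand_eq v).symm

theorem funMap_mul (v : Fin 2 → Q) :
    Structure.funMap (L := arith) arithFunc.mul v = mulM (v 0) (v 1) :=
  congrArg _ (FinVec.etaExpand_eq v).symm

theorem relMap_lt (v : Fin 2 → Q) :
    Structure.RelMap (L := arith) arithRel.lt v ↔ ltM (v 0) (v 1) :=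
  iff_of_eq (congrArg _ (FinVec.etaExpand_eq v).symm)

theorem Matches.hasExpressibleGraph_apply (hM : Matches R) (k : ℕ) :
    HasExpressibleGraph R fun v => v k :=
  ⟨.eq (k + 1) 0, fun _ _ => hM.eq⟩

theorem Matches.hasExpressibleGraph_comp₂ (hM : Matches R) {r : RelSym} {op : Q → Q → Q}
    (hop : ∀ {x y z}, R r x y z ↔ op x y = z) {f₀ f₁ : (ℕ → Q) → Q}
    (h₀ : HasExpressibleGraph R f₀) (h₁ : HasExpressibleGraph R f₁) :
    HasExpressibleGraph R fun v => op (f₀ v) (f₁ v) := by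
  obtain ⟨φ, hφ⟩ := (h₀.comp Nat.succ).atom (h₁.comp Nat.succ) (hM.hasExpressibleGraph_apply 0) r
  exact ⟨φ, fun v x => (hφ _).trans hop⟩

theorem Matches.hasExpressibleGraph_realize (hM : Matches R) {α : Type*} (t : arith.Term α)
    (ι : α → ℕ) : HasExpressibleGraph R fun v => t.realize (v ∘ ι) := by
  induction t with
  | var i => exact hM.hasExpressibleGraph_apply (ι i)
  | func f ts ih =>
    simp only [Term.realize_func]
    cases f with
    | zero => exact ⟨.isZero 0, fun _ _ => hM.zero.trans (Eq.congr_left (funMap_zero _).symm)⟩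
    | one => exact ⟨.isOne 0, fun _ _ => hM.one.trans (Eq.congr_left (funMap_one _).symm)⟩
    | add =>
      simp only [funMap_add]
      exact hM.hasExpressibleGraph_comp₂ hM.add (ih 0) (ih 1)
    | mul =>
      simp only [funMap_mul]
      exact hM.hasExpressibleGraph_comp₂ hM.mul (ih 0) (ih 1)

theorem Matches.isExpressible_realize (hM : Matches R) {α : Type*} {n : ℕ}
    (φ : arith.BoundedFormula α n) (ι : α → ℕ) (κ : Fin n → ℕ) :
    IsExpressible R fun v => φ.Realize (v ∘ ι) (v ∘ κ) := by
  induction φ generalizing ι with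
  | falsum => exact ⟨(Form.eq 0 0).neg, fun v => by simp [BoundedFormula.Realize, hM.eq]⟩
  | equal t₁ t₂ =>
    have ht (t) := hM.hasExpressibleGraph_realize t (Sum.elim ι κ)
    simpa only [BoundedFormula.Realize, ← Sum.comp_elim, hM.eq] using
      (ht t₁).atom (ht t₂) (ht t₁) .eq
  | rel r ts =>
    cases r
    have ht (t) := hM.hasExpressibleGraph_realize t (Sum.elim ι κ)
    simpa only [BoundedFormula.Realize, ← Sum.comp_elim, relMap_lt, hM.lt] using
      (ht (ts 0)).atom (ht (ts 1)) (ht (ts 0)) .lt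
  | imp φ₁ φ₂ ih₁ ih₂ =>
    simpa only [BoundedFormula.realize_imp] using (ih₁ ι κ).imp (ih₂ ι κ)
  | all φ ih =>
    have hκ (v : ℕ → Q) (x : Q) : (scons x v ∘ Fin.snoc (α := fun _ => ℕ) (Nat.succ ∘ κ) 0 :
        Fin _ → Q) = Fin.snoc (v ∘ κ) x := Fin.comp_snoc _ _ _
    have hι (v : ℕ → Q) (x : Q) : scons x v ∘ (Nat.succ ∘ ι) = v ∘ ι := rfl
    simpa only [BoundedFormula.realize_all, hι, hκ] using
      (ih (Nat.succ ∘ ι) (Fin.snoc (α := fun _ => ℕ) (Nat.succ ∘ κ) 0)).all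

theorem Matches.exists_form_of_definable (hM : Matches R) {s : Set Q}
    (hs : Set.Definable₁ (Set.univ : Set Q) arith s) :
    ∃ (φ : Form) (v : ℕ → Q), ∀ x, Sat R φ (scons x v) ↔ x ∈ s := by
  classical
  rw [Set.Definable₁, Set.definable_iff_exists_formula_sum] at hs
  obtain ⟨φ, hφ⟩ := hs
  let e := φ.freeVarFinset.equivFin
  let ι : φ.freeVarFinset → ℕ := fun a => if a.1.isLeft then e a + 1 else 0
  let v : ℕ → Q := fun k => if h : k < φ.freeVarFinset.card then
    Sum.elim (↑) (fun _ => zeroM Q) (e.symm ⟨k, h⟩).1 else zeroM Q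
  obtain ⟨ψ, hψ⟩ := hM.isExpressible_realize (φ.restrictFreeVar ι) id Fin.elim0
  refine ⟨ψ, v, fun x => (hψ _).trans ?_⟩
  have hx : x ∈ s ↔ (fun _ : Fin 1 => x) ∈ {y : Fin 1 → Q | y 0 ∈ s} := Iff.rfl
  rw [hx, hφ, Set.mem_ofPred_eq, Formula.Realize, Subsingleton.elim (default : Fin 0 → Q)]
  refine BoundedFormula.realize_restrictFreeVar _ fun a => ?_
  obtain ⟨a | a, ha⟩ := a <;> simp [ι, v]

theorem Matches.mem_of_definable (hM : Matches R) (hA : IsArith R) (hL : LeastCounterexample R)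
    {s : Set Q} (hs : Set.Definable₁ (Set.univ : Set Q) arith s) (hzero : zeroM Q ∈ s)
    (hsucc : ∀ x ∈ s, addM x (oneM Q) ∈ s) (x : Q) : x ∈ s := by
  obtain ⟨φ, v, hφ⟩ := hM.exists_form_of_definable hs
  by_contra hx
  obtain ⟨y, hy, hmin⟩ := hL φ v ⟨x, fun h => hx ((hφ x).1 h)⟩
  simp only [hφ] at hy hmin
  obtain ⟨p, e, he, hp⟩ := hA.exists_pred y fun h => hy (hM.zero.1 h ▸ hzero)
  refine hmin p (fun hps => hy ?_) (hA.lt_succ_of_eq p p e y he hp (hA.eq_refl p))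
  rw [← hM.add.1 hp, ← hM.one.1 he]
  exact hsucc p hps

theorem Matches.isPAModel (hM : Matches R) (hA : IsArith R) (hL : LeastCounterexample R) :
    IsPAModel Q := by
  have hzero : R.IsZero (zeroM Q) := hM.zero.2 rfl
  have hone : R.IsOne (oneM Q) := hM.one.2 rfl
  have hadd (x y : Q) : R .add x y (addM x y) := hM.add.2 rfl
  have hmul (x y : Q) : R .mul x y (mulM x y) := hM.mul.2 rfl
  refine ⟨fun x => hM.add.1 (hA.add_zero _ _ hzero), fun x y => ?_,
    fun x => hM.mul.1 (hA.mul_zero _ _ hzero), fun x y => ?_,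
    fun x h => hA.not_lt_zero _ _ hzero (hM.lt.2 h), fun x y => ?_, fun x h => ?_,
    fun x y h => ?_, fun s hs => hM.mem_of_definable hA hL hs⟩
  · exact (hM.add.1 (hA.add_succ _ _ _ _ _ _ hone (hadd _ _) (hadd _ _) (hadd _ _))).symm
  · exact (hM.add.1 (hA.mul_succ _ _ _ _ _ _ hone (hadd _ _) (hmul _ _) (hmul _ _))).symm
  · rw [← hM.lt, ← hM.lt, ← hM.eq]
    exact ⟨fun h => or_iff_not_imp_left.2 (hA.lt_succ _ _ _ _ hone (hadd _ _) h),
      Or.rec (hA.lt_succ_of_lt _ _ _ _ hone (hadd _ _))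
        (hA.lt_succ_of_eq _ _ _ _ hone (hadd _ _))⟩
  · exact hA.succ_ne_zero _ _ _ hone (hadd _ _) (hM.zero.2 h.symm)
  · exact hM.eq.1 (hA.succ_inj _ _ _ _ hone (hadd _ _) (h ▸ hadd _ _))

theorem Matches.dig_numeral (hM : Matches R) {a : Q} {i : ℕ} :
    Dig R a (numeral Q (2 ^ i)) (numeral Q (2 ^ (i + 1))) ↔ digitB a i := by
  simp only [Dig, digitB, hM.add, hM.mul, hM.lt]
  constructor
  · rintro ⟨u, t, _, _, rfl, rfl, h, ht⟩
    exact ⟨u, t, h.symm, ht⟩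
  · rintro ⟨u, t, h, ht⟩
    exact ⟨u, t, _, _, rfl, rfl, h.symm, ht⟩

theorem map_numeral (e : Q ≃[arith] ℕ) (n : ℕ) : e (numeral Q n) = n := by
  induction n with
  | zero => exact e.map_fun (arithFunc.zero : arith.Functions 0) ![]
  | succ n ih =>
    have hone : e (oneM Q) = 1 := e.map_fun (arithFunc.one : arith.Functions 0) ![]
    have hadd : e (addM (numeral Q n) (oneM Q)) = e (numeral Q n) + e (oneM Q) :=
      e.map_fun (arithFunc.add : arith.Functions 2) ![numeral Q n, oneM Q]
    rwa [ih, hone] at hadd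

theorem nonstandardModel_of_nonempty_sSy (hQ : IsPAModel Q) (h : (SSy Q).Nonempty) :
    NonstandardModel Q := by
  obtain ⟨_, a, ha, -⟩ := h
  exact ⟨hQ, fun ⟨e⟩ => ha ⟨e a, e.injective (map_numeral e _).symm⟩⟩

end FirstOrderStructures

section StandardSystem

theorem eqv_numeral {M Q : Type*} {R : RelStr M} {num : ℕ → M} {g : Q → M} [arith.Structure Q]
    (hA : IsArith R) (hN : IsNum R num) (hM : Matches (R.comap g)) (j : ℕ) :
    R.Eqv (g (numeral Q j)) (num j) := by
  induction j with
  | zero => exact hA.zero_unique _ _ (hM.zero.2 rfl) hN.zero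
  | succ j ih =>
    have hone : R.Eqv (g (oneM Q)) (num 1) := hA.one_unique _ _ (hM.one.2 rfl) hN.one
    have hadd : R .add (g (numeral Q j)) (g (oneM Q)) (g (numeral Q (j + 1))) := hM.add.2 rfl
    exact hA.add_unique _ _ _ _ (hA.congr _ _ _ _ _ _ _ ih hone (hA.eq_refl _) hadd) (hN.succ j)

theorem codes_iff {M Q : Type*} {R : RelStr M} {num : ℕ → M} {g : Q → M} [arith.Structure Q]
    (hA : IsArith R) (hN : IsNum R num) (hg : IsElementary g R) (hM : Matches (R.comap g))
    {X : Set ℕ} {q : Q} {b : M} (hq : R.Eqv (g q) b) :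
    Codes R num X b ↔ ¬ IsStd q ∧ ∀ i, i ∈ X ↔ digitB q i := by
  have hdig (i : ℕ) : digitB q i ↔ Dig R b (num (2 ^ i)) (num (2 ^ (i + 1))) := by
    rw [← hM.dig_numeral, dig_comap hg]
    exact hA.dig_congr hq (eqv_numeral hA hN hM _) (eqv_numeral hA hN hM _)
  have hnum (j : ℕ) : R.Eqv b (num j) ↔ q = numeral Q j := by
    have hj := eqv_numeral hA hN hM j
    refine Iff.trans ⟨fun h => ?_, fun h => ?_⟩ hM.eq
    · exact hA.eq_trans _ _ _ hq (hA.eq_trans _ _ _ h (hA.eq_symm _ _ hj))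
    · exact hA.eq_trans _ _ _ (hA.eq_symm _ _ hq) (hA.eq_trans _ _ _ h hj)
  simp only [Codes, CodesBit, forall_and, hnum, ← hdig, chi_eq_true, IsStd, not_exists]
  rw [and_comm]
  exact and_congr_right' (forall_congr' fun _ => iff_comm)

theorem TarskiVaught.exists_isPAModel.{u} {M : Type u} {R : RelStr M} {num : ℕ → M} {B : Set M}
    (hB : TarskiVaught R B) (hne : B.Nonempty) (hL : LeastCounterexample R) (hA : IsArith R)
    (hN : IsNum R num) :
    ∃ (Q : Type u) (_ : arith.Structure Q),
      IsPAModel Q ∧ SSy Q = {X | ∃ b ∈ B, Codes R num X b} := by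
  obtain ⟨Q, g, hgB, hg, hinj⟩ := hA.exists_transversal B
  have hE := hB.isElementary hA hgB hg
  have : Nonempty Q := hne.elim fun b hb => (hg b hb).nonempty
  have hAQ := hA.comap hE
  let _ := hAQ.toStructure
  have hM := hAQ.matches_toStructure hinj
  refine ⟨Q, _, hM.isPAModel hAQ (hL.comap hE), Set.ext fun X => ⟨?_, ?_⟩⟩
  · rintro ⟨q, hq⟩
    exact ⟨g q, hgB q, (codes_iff hA hN hE hM (hA.eq_refl _)).2 hq⟩
  · rintro ⟨b, hb, hX⟩
    obtain ⟨q, hq⟩ := hg b hb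
    exact ⟨q, (codes_iff hA hN hE hM hq).1 hX⟩

theorem Good.mem_of_codes {M : Type*} {R : RelStr M} {num : ℕ → M} {B : Set M} {S : Set (Set ℕ)}
    (hS : ScottSet S) (hB : Good S R num B) {X : Set ℕ} {a : M} (ha : a ∈ B)
    (hX : Codes R num X a) : X ∈ S := by
  convert hB.setOf_dig_mem hS ha using 1
  ext j
  exact (chi_eq_true.symm.trans (hX j).1.symm)

end StandardSystem

end Arith

open Arith in
/-- **Knight–Nadel.** Every Scott set of cardinality at most `ℵ₁` is the standard system
of some non-standard model of `PA`. -/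
theorem statement_3 (S : Set (Set ℕ)) (hS : ScottSet S)
    (hcard : Cardinal.mk S ≤ Cardinal.aleph 1) :
    ∃ (M : Type) (_ : arith.Structure M), NonstandardModel M ∧ SSy M = S := by
  obtain ⟨M, R, num, hL, hR, hA, hN, hnum⟩ := hS.exists_ambient
  obtain ⟨B, hnumB, hgood, hB, hcodes⟩ := hS.exists_good_superset hcard hL hR hN hnum
  obtain ⟨Q, _, hQ, hSSy⟩ := hB.exists_isPAModel ⟨_, hnumB ⟨0, rfl⟩⟩ hL hA hN
  have hS_eq : SSy Q = S := hSSy.trans <| Set.ext fun X =>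
    ⟨fun ⟨_, hb, hX⟩ => hgood.mem_of_codes hS hb hX, hcodes X⟩
  exact ⟨Q, _, nonstandardModel_of_nonempty_sSy hQ (hS_eq ▸ hS.1), hS_eq⟩
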